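/- arXiv:2511.09472 — 2 statements merged into one kernel-verified Lean document; each statement's English description precedes it below -/
import Mathlib

section
/- Let d ≥ 1, γ ∈ (0,2), α > 0, ξ ≥ 0, T > 0, and let f : ℝ^d → [0,∞) be continuous, radially symmetric, and such that for some ζ > 0 the map z ↦ f(z) − ζ|z|^γ is quasi-convex. Then E^{P̂_{α,T,f,ξ}}[|x_T|²] ≤ E^{P̃_{ζα,T,γ,ξ}}[|x_T|²], where P̃_{ζα,T,γ,ξ} is the tilted measure with interaction function z ↦ |z|^γ and coupling constant ζα. -/
/-!
Write `f = ζ ‖·‖ ^ γ + g`. The function `g` is continuous, even, quasi-convex and nonnegative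
(its minimum is `g 0 = f 0`), so, up to normalisation, the density of the tilted measure of `f` is
`F * G` with `F = exp (-ζ α ∫∫ ‖x_t - x_s‖ ^ γ / …)`, the density for the pure power, and
`G = exp (-α ∫∫ g (x_t - x_s) / …)`. The claim is
`E[‖x_T‖² F G] * E[F] ≤ E[‖x_T‖² F] * E[F G]`, and it is the derivative at `u = 0` of
`E[e^{-u ‖x_T‖²} F] * E[F G] ≤ E[F] * E[e^{-u ‖x_T‖²} F G]` (`CorrIneq`, `CorrIneq.moment`).

After discretising the double integrals, `G` is a product of even quasi-concave functions of a
Gaussian vector and `‖x_T‖²` is a sum of squares of linear forms. Two ingredients give `CorrIneq`.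

* A Gaussian correlation inequality (`gaussian_correlation`): for positive definite `q` and a sum
  of squares `a`, `∫ e^{-q-a} * ∫ e^{-q} G ≤ ∫ e^{-q} * ∫ e^{-q-a} G`. It is enough to
  treat `a = l²`: completing the square writes `e^{-q}` as a mixture of translates of
  `e^{-q-l²}`, and a translate can only decrease the overlap with an even log-concave function
  (`anderson`, a consequence of the Prékopa inequality `prekopa_pi`). The layer-cake formula passes
  from log-concave `G` to products of quasi-concave ones.
* An FKG argument (`corrIneq_prod`): when `F = ∏ (1 + c_k e^{-p_k})` with `c_k ≥ 0` and `p_k` sums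
  of squares, expanding the product indexes all four expectations by subsets `S` of the set of
  factors, and the four functions theorem of Ahlswede and Daykin reduces `CorrIneq` to the Gaussian
  correlation inequality with `r = ∑_{S ∩ S'} p`, `a = q + ∑_{S \ S'} p`, `b = ∑_{S' \ S} p`.

The power `p ^ β`, with `p = ‖x_t - x_s‖²` and `β = γ / 2 ≤ 1`, is reached by limits: products
give `exp (∑ c_k e^{-p_k})`, the nonnegative Taylor coefficients of `1 - (1 - y) ^ β` at
`y = e^{-p}` give `exp (-∑ c_k (1 - e^{-p_k}) ^ β)`, and rescaling `p` by `ε → 0` gives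
`exp (-∑ c_k p_k ^ β)` (`corrIneq_rpow`).
-/

open MeasureTheory ProbabilityTheory Real

noncomputable section

/-- Path space `C([0,∞);ℝ^d)` realized as continuous maps `ℝ → ℝ^d`. -/
abbrev PathSpace (d : ℕ) := C(ℝ, EuclideanSpace ℝ (Fin d))

instance (d : ℕ) : MeasurableSpace (PathSpace d) := borel _
instance (d : ℕ) : BorelSpace (PathSpace d) := ⟨rfl⟩

/-- `P` is the law of standard `d`-dimensional Brownian motion started at `0`
(on the time window `[0,T]`): a centered Gaussian measure on path space with the
Brownian covariance structure `E[x_s^i x_t^j] = δ_{ij} min(s,t)`. -/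
def IsWienerMeasure {d : ℕ} (T : ℝ) (P : Measure (PathSpace d)) : Prop :=
  IsProbabilityMeasure P ∧
  (∀ L : PathSpace d →L[ℝ] ℝ, ∃ v : NNReal, P.map L = gaussianReal 0 v) ∧
  (∀ s t : ℝ, s ∈ Set.Icc 0 T → t ∈ Set.Icc 0 T → ∀ i j : Fin d,
    ∫ ω, (ω s) i * (ω t) j ∂P = if i = j then min s t else 0)

/-- The interaction energy `∫_0^T ∫_0^T f(x_t - x_s)/(1+|t-s|^ξ) ds dt`. -/
def pairEnergy {d : ℕ} (f : EuclideanSpace ℝ (Fin d) → ℝ) (ξ T : ℝ) (ω : PathSpace d) : ℝ :=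
  ∫ t in Set.Icc (0:ℝ) T, ∫ s in Set.Icc (0:ℝ) T, f (ω t - ω s) / (1 + |t - s| ^ ξ)

/-- The tilted path measure `P̂_{α,T,f,ξ}`, with density proportional to
`exp(-α ∫∫ f(x_t-x_s)/(1+|t-s|^ξ))` with respect to `P`. -/
def tiltedPath {d : ℕ} (P : Measure (PathSpace d)) (f : EuclideanSpace ℝ (Fin d) → ℝ)
    (α ξ T : ℝ) : Measure (PathSpace d) :=
  P.tilted (fun ω => -α * pairEnergy f ξ T ω)

section

open Filter Topology
open scoped Pointwise

/-! ### The Prékopa–Leindler inequality -/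

/-- The one-dimensional Brunn–Minkowski inequality for midpoints. For compact `K ⊆ A`, `L ⊆ B`
the sets `(K + min L) / 2` and `(max K + L) / 2` lie in `C` and meet in at most one point. -/
lemma brunn_minkowski_one {A B C : Set ℝ} (hA : MeasurableSet A) (hB : MeasurableSet B)
    (hA0 : A.Nonempty) (hB0 : B.Nonempty) (hC : ∀ a ∈ A, ∀ b ∈ B, (a + b) / 2 ∈ C) :
    volume A + volume B ≤ 2 * volume C := by
  have key : ∀ K ⊆ A, IsCompact K → ∀ L ⊆ B, IsCompact L →
      volume K + volume L ≤ 2 * volume C := by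
    have key1 : ∀ K ⊆ A, IsCompact K → K.Nonempty → ∀ L ⊆ B, IsCompact L → L.Nonempty →
        volume K + volume L ≤ 2 * volume C := by
      intro K hKA hK hK0 L hLB hL hL0
      obtain ⟨k, hk, hkmax⟩ := hK.exists_isGreatest hK0
      obtain ⟨l, hl, hlmin⟩ := hL.exists_isLeast hL0
      have himg : ∀ (S : Set ℝ) (c : ℝ), volume ((fun x => (2:ℝ)⁻¹ * x + c) '' S) = 2⁻¹ * volume S := by
        intro S c
        have : (fun x : ℝ => (2:ℝ)⁻¹ * x + c) '' S = (fun y => y + c) '' ((2:ℝ)⁻¹ • S) := by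
          rw [← Set.image_smul, Set.image_image]; simp
        rw [this]
        rw [Set.image_add_right, measure_preimage_add_right, Measure.addHaar_smul]
        simp
      set U := (fun x => (2:ℝ)⁻¹ * x + l / 2) '' K
      set W := (fun x => (2:ℝ)⁻¹ * x + k / 2) '' L
      have hU : IsCompact U := hK.image (by fun_prop)
      have hW : IsCompact W := hL.image (by fun_prop)
      have hUC : U ∪ W ⊆ C := by
        rintro _ (⟨x, hx, rfl⟩ | ⟨x, hx, rfl⟩)
        · convert hC x (hKA hx) l (hLB hl) using 1; ring
        · convert hC k (hKA hk) x (hLB hx) using 1; ring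
      have hdis : AEDisjoint volume U W := by
        refine measure_mono_null (t := {(k + l) / 2}) ?_ (by simp)
        rintro _ ⟨⟨x, hx, rfl⟩, ⟨y, hy, hxy⟩⟩
        have h1 := hkmax hx
        have h2 := hlmin hy
        simp only [Set.mem_singleton_iff] at *
        linarith
      calc volume K + volume L = 2 * (volume U + volume W) := by
            rw [himg, himg, ← mul_add, ← mul_assoc, ENNReal.mul_inv_cancel (by simp) (by simp), one_mul]
        _ = 2 * volume (U ∪ W) := by
            rw [measure_union₀ hW.measurableSet.nullMeasurableSet hdis]
        _ ≤ 2 * volume C := by gcongr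
    intro K hKA hK L hLB hL
    obtain ⟨a, ha⟩ := hA0
    obtain ⟨b, hb⟩ := hB0
    refine le_trans ?_ (key1 (K ∪ {a}) (by simp [hKA, ha, Set.insert_subset_iff]) (hK.union isCompact_singleton)
      (by simp) (L ∪ {b}) (by simp [hLB, hb, Set.insert_subset_iff]) (hL.union isCompact_singleton) (by simp))
    gcongr <;> simp
  rw [hA.measure_eq_iSup_isCompact, hB.measure_eq_iSup_isCompact]
  simp only [iSup_and']
  exact ENNReal.biSup_add_biSup_le' (p := fun K : Set ℝ => K ⊆ A ∧ IsCompact K)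
    (q := fun L : Set ℝ => L ⊆ B ∧ IsCompact L) ⟨∅, by simp⟩ ⟨∅, by simp⟩
    fun K hK L hL => key K hK.1 hK.2 L hL.1 hL.2

/-- Additive form of the one-dimensional Prékopa–Leindler inequality for functions of supremum `1`:
Brunn–Minkowski applied to every superlevel set. -/
lemma prekopa_one_aux {f g h : ℝ → ℝ} (hf : Measurable f) (hg : Measurable g) (hh : Measurable h)
    (hf0 : ∀ x, 0 ≤ f x) (hg0 : ∀ x, 0 ≤ g x) (hh0 : ∀ x, 0 ≤ h x)
    (hf1 : ∀ x, f x ≤ 1) (hg1 : ∀ x, g x ≤ 1)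
    (hfs : ∀ t < 1, ∃ x, t < f x) (hgs : ∀ t < 1, ∃ x, t < g x)
    (H : ∀ x y, f x * g y ≤ h ((x + y) / 2) ^ 2) :
    (∫⁻ x, ENNReal.ofReal (f x)) + ∫⁻ x, ENNReal.ofReal (g x)
      ≤ 2 * ∫⁻ x, ENNReal.ofReal (h x) := by
  rw [lintegral_eq_lintegral_meas_lt _ (.of_forall hf0) hf.aemeasurable,
    lintegral_eq_lintegral_meas_lt _ (.of_forall hg0) hg.aemeasurable,
    lintegral_eq_lintegral_meas_lt _ (.of_forall hh0) hh.aemeasurable,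
    ← lintegral_add_left, ← lintegral_const_mul']
  · refine setLIntegral_mono' measurableSet_Ioi fun t ht => ?_
    by_cases ht1 : t < 1
    · refine brunn_minkowski_one (measurableSet_lt measurable_const hf)
        (measurableSet_lt measurable_const hg) (hfs t ht1) (hgs t ht1) fun a ha b hb => ?_
      have ht : 0 < t := ht
      simp only [Set.mem_ofPred_eq] at *
      have := H a b
      refine lt_of_pow_lt_pow_left₀ 2 (hh0 _) (lt_of_lt_of_le ?_ this)
      nlinarith
    · have h1 : {a | t < f a} = ∅ := by
        ext x; simp; linarith [hf1 x]
      have h2 : {a | t < g a} = ∅ := by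
        ext x; simp; linarith [hg1 x]
      simp [h1, h2]
  · simp
  · exact Antitone.measurable fun s t hst => measure_mono fun x (hx : t < f x) => lt_of_le_of_lt hst hx

lemma ennreal_four_mul_le (x y : ENNReal) : 4 * (x * y) ≤ (x + y) ^ 2 := by
  by_cases hx : x = ⊤
  · simp [hx]
  by_cases hy : y = ⊤
  · simp [hy]
  lift x to NNReal using hx
  lift y to NNReal using hy
  norm_cast
  rw [← NNReal.coe_le_coe]
  push_cast
  nlinarith [sq_nonneg ((x:ℝ) - y)]

/-- The one-dimensional Prékopa–Leindler inequality for bounded functions: after normalising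
both suprema to `1`, the additive form and the AM–GM inequality. -/
lemma prekopa_one_bdd {f g h : ℝ → ℝ} (hf : Measurable f) (hg : Measurable g) (hh : Measurable h)
    (hf0 : ∀ x, 0 ≤ f x) (hg0 : ∀ x, 0 ≤ g x) (hh0 : ∀ x, 0 ≤ h x) (M : ℝ)
    (hf1 : ∀ x, f x ≤ M) (hg1 : ∀ x, g x ≤ M)
    (H : ∀ x y, f x * g y ≤ h ((x + y) / 2) ^ 2) :
    (∫⁻ x, ENNReal.ofReal (f x)) * ∫⁻ x, ENNReal.ofReal (g x)
      ≤ (∫⁻ x, ENNReal.ofReal (h x)) ^ 2 := by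
  have bf : BddAbove (Set.range f) := ⟨M, by rintro _ ⟨x, rfl⟩; exact hf1 x⟩
  have bg : BddAbove (Set.range g) := ⟨M, by rintro _ ⟨x, rfl⟩; exact hg1 x⟩
  set a := ⨆ x, f x with ha
  set b := ⨆ x, g x with hb
  have hfa : ∀ x, f x ≤ a := fun x => le_ciSup bf x
  have hgb : ∀ x, g x ≤ b := fun x => le_ciSup bg x
  rcases (le_trans (hf0 0) (hfa 0)).eq_or_lt with ha0 | ha0
  · have : ∀ x, f x = 0 := fun x => le_antisymm (ha0 ▸ hfa x) (hf0 x)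
    simp [this]
  rcases (le_trans (hg0 0) (hgb 0)).eq_or_lt with hb0 | hb0
  · have : ∀ x, g x = 0 := fun x => le_antisymm (hb0 ▸ hgb x) (hg0 x)
    simp [this]
  have hab : 0 < √(a * b) := by positivity
  have := prekopa_one_aux (f := fun x => a⁻¹ * f x) (g := fun x => b⁻¹ * g x)
    (h := fun x => (√(a * b))⁻¹ * h x) (by fun_prop) (by fun_prop) (by fun_prop)
    (fun x => mul_nonneg (by positivity) (hf0 x)) (fun x => mul_nonneg (by positivity) (hg0 x))
    (fun x => mul_nonneg (by positivity) (hh0 x))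
    (fun x => by rw [inv_mul_le_iff₀ ha0]; simpa using hfa x)
    (fun x => by rw [inv_mul_le_iff₀ hb0]; simpa using hgb x)
    (fun t ht => by
      obtain ⟨x, hx⟩ := exists_lt_of_lt_ciSup (show a * t < ⨆ x, f x by rw [← ha]; nlinarith)
      exact ⟨x, by rw [lt_inv_mul_iff₀ ha0]; exact hx⟩)
    (fun t ht => by
      obtain ⟨x, hx⟩ := exists_lt_of_lt_ciSup (show b * t < ⨆ x, g x by rw [← hb]; nlinarith)
      exact ⟨x, by rw [lt_inv_mul_iff₀ hb0]; exact hx⟩)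
    (fun x y => by
      rw [mul_pow, inv_pow, Real.sq_sqrt (by positivity), mul_inv]
      calc a⁻¹ * f x * (b⁻¹ * g y) = a⁻¹ * b⁻¹ * (f x * g y) := by ring
        _ ≤ _ := by gcongr; exact H x y)
  have e : ∀ (c : ℝ) (hc : 0 < c) (u : ℝ → ℝ), ∫⁻ x, ENNReal.ofReal (c⁻¹ * u x)
      = ENNReal.ofReal c⁻¹ * ∫⁻ x, ENNReal.ofReal (u x) := by
    intro c hc u
    rw [← lintegral_const_mul' _ _ (by simp)]
    congr with x
    rw [ENNReal.ofReal_mul (by positivity)]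
  rw [e a ha0, e b hb0, e _ hab] at this
  set X := ∫⁻ x, ENNReal.ofReal (f x)
  set Y := ∫⁻ x, ENNReal.ofReal (g x)
  set Z := ∫⁻ x, ENNReal.ofReal (h x)
  have h1 := (ennreal_four_mul_le _ _).trans (pow_le_pow_left' this 2)
  have h2 : ENNReal.ofReal (a * b) * ENNReal.ofReal (a⁻¹) * ENNReal.ofReal b⁻¹ = 1 := by
    rw [← ENNReal.ofReal_mul (by positivity), ← ENNReal.ofReal_mul (by positivity)]
    rw [show a * b * a⁻¹ * b⁻¹ = 1 by field_simp]; simp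
  have h3 : ENNReal.ofReal (a * b) * ENNReal.ofReal ((√(a * b))⁻¹) ^ 2 = 1 := by
    rw [← ENNReal.ofReal_pow (by positivity), ← ENNReal.ofReal_mul (by positivity), inv_pow,
      Real.sq_sqrt (by positivity), mul_inv_cancel₀ (by positivity)]; simp
  have h4 : 4 * (X * Y) ≤ 4 * Z ^ 2 := by
    calc 4 * (X * Y) = (ENNReal.ofReal (a * b) * ENNReal.ofReal (a⁻¹) * ENNReal.ofReal b⁻¹) * (4 * (X * Y)) := by
          rw [h2, one_mul]
      _ = ENNReal.ofReal (a * b) * (4 * (ENNReal.ofReal (a⁻¹) * X * (ENNReal.ofReal b⁻¹ * Y))) := by ring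
      _ ≤ ENNReal.ofReal (a * b) * (2 * (ENNReal.ofReal ((√(a * b))⁻¹) * Z)) ^ 2 := by gcongr
      _ = (ENNReal.ofReal (a * b) * ENNReal.ofReal ((√(a * b))⁻¹) ^ 2) * (4 * Z ^ 2) := by ring
      _ = 4 * Z ^ 2 := by rw [h3, one_mul]
  rwa [ENNReal.mul_le_mul_iff_right (by simp) (by simp)] at h4

/-- The one-dimensional Prékopa–Leindler inequality at the midpoint. -/
lemma prekopa_one {f g h : ℝ → ENNReal} (hf : Measurable f) (hg : Measurable g)
    (hh : Measurable h) (H : ∀ x y, f x * g y ≤ h ((x + y) / 2) ^ 2) :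
    (∫⁻ x, f x) * ∫⁻ x, g x ≤ (∫⁻ x, h x) ^ 2 := by
  have trunc : ∀ N : ℕ, (∫⁻ x, min (f x) N) * ∫⁻ x, min (g x) N ≤ (∫⁻ x, h x) ^ 2 := by
    intro N
    have fin : ∀ (u : ℝ → ENNReal) x, min (u x) N ≠ ⊤ := fun u x => by simp
    have e : ∀ (u : ℝ → ENNReal), ∫⁻ x, min (u x) N
        = ∫⁻ x, ENNReal.ofReal ((min (u x) N).toReal) := fun u => by
      congr with x; rw [ENNReal.ofReal_toReal (fin u x)]
    have bd : ∀ (u : ℝ → ENNReal) x, (min (u x) N).toReal ≤ N := fun u x => by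
      simpa using ENNReal.toReal_mono (by simp) (min_le_right (u x) N)
    refine le_trans ?_ (pow_le_pow_left' (lintegral_mono fun x => min_le_left (h x) N) 2)
    rw [e f, e g, e h]
    refine prekopa_one_bdd (by fun_prop) (by fun_prop) (by fun_prop) (by simp) (by simp) (by simp) N
      (bd f) (bd g) fun x y => ?_
    rw [← ENNReal.toReal_mul, ← ENNReal.toReal_pow]
    refine ENNReal.toReal_mono (by simp [ENNReal.pow_eq_top_iff]) ?_
    rcases le_total (h ((x + y) / 2)) N with hN | hN
    · rw [min_eq_left hN]
      exact le_trans (mul_le_mul' (min_le_left _ _) (min_le_left _ _)) (H x y)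
    · rw [min_eq_right hN, sq]
      exact mul_le_mul' (min_le_right _ _) (min_le_right _ _)
  have mono : ∀ (u : ℝ → ENNReal), Measurable u →
      Filter.Tendsto (fun N : ℕ => ∫⁻ x, min (u x) N) Filter.atTop (nhds (∫⁻ x, u x)) := by
    intro u hu
    refine lintegral_tendsto_of_tendsto_of_monotone (fun n => by fun_prop)
      (.of_forall fun x m n hmn => by dsimp; gcongr) (.of_forall fun x => ?_)
    have : Filter.Tendsto (fun N : ℕ => min (u x) N) Filter.atTop (nhds (min (u x) ⊤)) :=
      tendsto_const_nhds.min ENNReal.tendsto_nat_nhds_top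
    simpa using this
  by_cases hz : (∫⁻ x, f x) = 0 ∨ (∫⁻ x, g x) = 0
  · rcases hz with hz | hz <;> simp [hz]
  push Not at hz
  exact le_of_tendsto (ENNReal.Tendsto.mul (mono f hf) (.inl hz.1) (mono g hg) (.inl hz.2))
    (.of_forall trunc)

/-- The Prékopa–Leindler inequality at the midpoint, in dimension `n`, by induction on `n`. -/
lemma prekopa_pi (n : ℕ) {f g h : (Fin n → ℝ) → ENNReal} (hf : Measurable f) (hg : Measurable g)
    (hh : Measurable h) (H : ∀ x y, f x * g y ≤ h ((2:ℝ)⁻¹ • (x + y)) ^ 2) :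
    (∫⁻ x, f x) * ∫⁻ x, g x ≤ (∫⁻ x, h x) ^ 2 := by
  induction n with
  | zero =>
    rw [volume_pi, Measure.pi_of_empty _ (default : Fin 0 → ℝ)]
    simp only [lintegral_dirac]
    convert H default default
  | succ n ih =>
    have e : ∀ u : (Fin (n+1) → ℝ) → ENNReal, Measurable u →
        ∫⁻ x, u x = ∫⁻ t : ℝ, ∫⁻ y : Fin n → ℝ, u (Fin.cons t y) := by
      intro u hu
      have mp := (volume_preserving_piFinSuccAbove (fun _ : Fin (n+1) => ℝ) 0).symm
      rw [← mp.lintegral_comp hu, Measure.volume_eq_prod, lintegral_prod]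
      · simp [MeasurableEquiv.piFinSuccAbove, Fin.insertNthEquiv]
      · exact (hu.comp (MeasurableEquiv.measurable _)).aemeasurable
    have mc : Measurable fun p : ℝ × (Fin n → ℝ) => (Fin.cons p.1 p.2 : Fin (n+1) → ℝ) := by
      refine measurable_pi_lambda _ fun i => ?_
      refine Fin.cases ?_ (fun j => ?_) i
      · simpa using measurable_fst
      · simp only [Fin.cons_succ]; fun_prop
    rw [e f hf, e g hg, e h hh]
    refine prekopa_one (Measurable.lintegral_prod_right' (hf.comp mc))
      (Measurable.lintegral_prod_right' (hg.comp mc))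
      (Measurable.lintegral_prod_right' (hh.comp mc)) fun s t => ?_
    refine ih (by fun_prop) (by fun_prop) (by fun_prop) fun x y => ?_
    refine (H _ _).trans (le_of_eq ?_)
    congr 2
    ext i
    refine Fin.cases ?_ (fun j => ?_) i
    · simp; ring
    · simp; ring

/-! ### Anderson's inequality and adding one square -/

/-- Even, midpoint log-concave functions on `ℝⁿ`, with values in `[0, ∞]`. -/
structure IsEvenLogConcave {n : ℕ} (G : (Fin n → ℝ) → ENNReal) : Prop where
  meas : Measurable G
  even : ∀ x, G (-x) = G x
  logc : ∀ x y, G x * G y ≤ G ((2:ℝ)⁻¹ • (x + y)) ^ 2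

lemma IsEvenLogConcave.mul {n : ℕ} {F G : (Fin n → ℝ) → ENNReal} (hF : IsEvenLogConcave F)
    (hG : IsEvenLogConcave G) : IsEvenLogConcave (fun x => F x * G x) where
  meas := hF.meas.mul hG.meas
  even x := by rw [hF.even, hG.even]
  logc x y := by
    rw [mul_mul_mul_comm, mul_pow]
    exact mul_le_mul' (hF.logc x y) (hG.logc x y)

lemma IsEvenLogConcave.indicator {n : ℕ} {K : Set (Fin n → ℝ)} (hK : MeasurableSet K)
    (hsymm : ∀ x, -x ∈ K ↔ x ∈ K) (hconv : Convex ℝ K) :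
    IsEvenLogConcave (K.indicator 1) where
  meas := measurable_one.indicator hK
  even x := by by_cases hx : x ∈ K <;> simp [Set.indicator, hsymm, hx]
  logc x y := by
    by_cases hx : x ∈ K
    · by_cases hy : y ∈ K
      · have : (2:ℝ)⁻¹ • (x + y) ∈ K := by
          rw [smul_add]; exact hconv hx hy (by norm_num) (by norm_num) (by norm_num)
        rw [Set.indicator_of_mem hx, Set.indicator_of_mem hy, Set.indicator_of_mem this]; simp
      · simp [hy]
    · simp [hx]

/-- Anderson's inequality in functional form: translating one of two even log-concave functions
decreases the integral of their product. The translates by `v` and by `-v` have the same integral,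
and their midpoint is the untranslated product. -/
lemma anderson {n : ℕ} {F G : (Fin n → ℝ) → ENNReal} (hF : IsEvenLogConcave F)
    (hG : IsEvenLogConcave G) (v : Fin n → ℝ) :
    ∫⁻ x, F (x - v) * G x ≤ ∫⁻ x, F x * G x := by
  have hFm := hF.meas
  have hGm := hG.meas
  have h1 : ∫⁻ x, F (x + v) * G x = ∫⁻ x, F (x - v) * G x := by
    rw [← lintegral_neg_eq_self (fun x => F (x - v) * G x)]
    congr with x
    rw [hG.even, ← hF.even (x + v)]
    congr 2; abel
  have h2 := prekopa_pi n (f := fun x => F (x - v) * G x) (g := fun x => F (x + v) * G x)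
    (h := fun x => F x * G x) (by fun_prop) (by fun_prop) (by fun_prop) fun x y => by
      rw [mul_mul_mul_comm, mul_pow]
      refine mul_le_mul' ?_ (hG.logc x y)
      have := hF.logc (x - v) (y + v)
      rwa [show x - v + (y + v) = x + y by abel] at this
  rw [h1, ← sq] at h2
  exact (ENNReal.pow_le_pow_left_iff two_ne_zero).1 h2

/-- Finite sums of squares of linear forms, the form in which positive semidefinite quadratic forms
are used here. -/
inductive IsSOS {V : Type*} [AddCommGroup V] [Module ℝ V] : (V → ℝ) → Prop
  | zero : IsSOS (fun _ => 0)
  | add_sq {q : V → ℝ} (l : V →ₗ[ℝ] ℝ) (hq : IsSOS q) : IsSOS (fun x => q x + l x ^ 2)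

namespace IsSOS
variable {V W : Type*} [AddCommGroup V] [Module ℝ V] [AddCommGroup W] [Module ℝ W]

lemma add {p q : V → ℝ} (hp : IsSOS p) (hq : IsSOS q) : IsSOS (fun x => p x + q x) := by
  induction hq with
  | zero => simpa using hp
  | add_sq l _ ih => simpa only [add_assoc] using ih.add_sq l

lemma sq (l : V →ₗ[ℝ] ℝ) : IsSOS (fun x => l x ^ 2) := by
  simpa using IsSOS.zero.add_sq l

lemma sum {ι : Type*} (s : Finset ι) {q : ι → V → ℝ} (hq : ∀ i ∈ s, IsSOS (q i)) :
    IsSOS (fun x => ∑ i ∈ s, q i x) := by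
  classical
  induction s using Finset.induction with
  | empty => simpa using IsSOS.zero
  | insert a s ha ih =>
    simp only [Finset.sum_insert ha]
    exact (hq a (by simp)).add (ih fun i hi => hq i (by simp [hi]))

lemma comp {q : V → ℝ} (hq : IsSOS q) (A : W →ₗ[ℝ] V) : IsSOS (fun x => q (A x)) := by
  induction hq with
  | zero => exact .zero
  | add_sq l _ ih => exact ih.add_sq (l ∘ₗ A)

lemma const_mul {q : V → ℝ} (hq : IsSOS q) {c : ℝ} (hc : 0 ≤ c) : IsSOS (fun x => c * q x) := by
  induction hq with
  | zero => simpa using IsSOS.zero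
  | add_sq l _ ih =>
    convert ih.add_sq (√c • l) using 2 with x
    simp [mul_pow, Real.sq_sqrt hc, mul_add]

lemma nonneg {q : V → ℝ} (hq : IsSOS q) (x : V) : 0 ≤ q x := by
  induction hq with
  | zero => exact le_rfl
  | add_sq l _ ih => positivity

lemma exists_bilin {q : V → ℝ} (hq : IsSOS q) :
    ∃ B : LinearMap.BilinForm ℝ V, (∀ x y, B x y = B y x) ∧ ∀ x, q x = B x x := by
  induction hq with
  | zero => exact ⟨0, by simp⟩
  | add_sq l _ ih =>
    obtain ⟨B, h1, h2⟩ := ih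
    refine ⟨B + LinearMap.BilinForm.linMulLin l l, fun x y => ?_, fun x => ?_⟩
    · simp [h1 x y, mul_comm]
    · simp [h2 x, pow_two]

lemma measurable {n : ℕ} {q : (Fin n → ℝ) → ℝ} (hq : IsSOS q) : Measurable q := by
  induction hq with
  | zero => fun_prop
  | add_sq l _ ih =>
    have : Measurable l := l.continuous_of_finiteDimensional.measurable
    fun_prop

lemma midpoint_le {q : V → ℝ} (hq : IsSOS q) (x y : V) :
    2 * q ((2:ℝ)⁻¹ • (x + y)) ≤ q x + q y := by
  induction hq with
  | zero => simp
  | add_sq l _ ih =>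
    simp only [map_smul, map_add, smul_eq_mul] at *
    nlinarith [sq_nonneg (l x - l y)]

lemma neg {q : V → ℝ} (hq : IsSOS q) (x : V) : q (-x) = q x := by
  induction hq with
  | zero => rfl
  | add_sq l _ ih => simp [ih]

lemma isEvenLogConcave {n : ℕ} {q : (Fin n → ℝ) → ℝ} (hq : IsSOS q) :
    IsEvenLogConcave (fun x => ENNReal.ofReal (rexp (-q x))) where
  meas := by have := hq.measurable; fun_prop
  even x := by rw [hq.neg]
  logc x y := by
    rw [← ENNReal.ofReal_mul (exp_nonneg _), ← ENNReal.ofReal_pow (exp_nonneg _), ← exp_add,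
      ← exp_nat_mul]
    refine ENNReal.ofReal_le_ofReal (exp_le_exp.2 ?_)
    have := hq.midpoint_le x y
    push_cast
    linarith

end IsSOS

/-- The unnormalised Gaussian weight `exp (-q)` as a function to `[0, ∞]`. -/
def gw {n : ℕ} (q : (Fin n → ℝ) → ℝ) (x : Fin n → ℝ) : ENNReal := ENNReal.ofReal (rexp (-q x))

/-- Adding the square of one linear form `l` to a positive definite `q` increases the weighted mean
of an even log-concave `G`. With `q' = q + l²`, `v` the vector representing `l` for `q'` and
`κ = 1 - q' v`, the identity `q' (x - s v) + κ s² = q x + (s - l x)²` shows that `e^{-q}` is a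
mixture over `s` of the translates `e^{-q' (x - s v)}`, to which Anderson's inequality applies. -/
lemma gaussian_correlation_sq {n : ℕ} {q : (Fin n → ℝ) → ℝ} (hq : IsSOS q)
    (hpos : ∀ x, q x = 0 → x = 0) (l : (Fin n → ℝ) →ₗ[ℝ] ℝ) {G : (Fin n → ℝ) → ENNReal}
    (hG : IsEvenLogConcave G) :
    (∫⁻ x, gw (fun x => q x + l x ^ 2) x) * ∫⁻ x, gw q x * G x
      ≤ (∫⁻ x, gw q x) * ∫⁻ x, gw (fun x => q x + l x ^ 2) x * G x := by
  set q' : (Fin n → ℝ) → ℝ := fun x => q x + l x ^ 2 with hq'def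
  have hq' : IsSOS q' := hq.add_sq l
  have hlm : Measurable l := l.continuous_of_finiteDimensional.measurable
  obtain ⟨B, hBs, hB⟩ := hq.exists_bilin
  set B' := B + LinearMap.BilinForm.linMulLin l l with hB'
  have hB'q : ∀ x, B' x x = q' x := fun x => by simp [hB', hq'def, hB, pow_two]
  have hinj : Function.Injective B' := by
    rw [injective_iff_map_eq_zero]
    intro x hx
    apply hpos
    have : q' x = 0 := by rw [← hB'q, hx]; simp
    simp only [hq'def] at this
    linarith [hq.nonneg x, sq_nonneg (l x)]
  obtain ⟨v, hv⟩ := (LinearMap.injective_iff_surjective_of_finrank_eq_finrank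
    (Subspace.dual_finrank_eq).symm).1 hinj l
  have hvx : ∀ x, B v x + l v * l x = l x := fun x => by
    have := LinearMap.congr_fun hv x
    simpa [hB'] using this
  -- `hvx`: `v` represents `l` in the bilinear form of `q'`; `κ` is the resulting coefficient of `s²`
  set κ := 1 - q' v with hκ
  have hsq : ∀ x (s : ℝ), q' (x - s • v) + κ * s ^ 2 = q x + (s - l x) ^ 2 := by
    intro x s
    have h1 := hvx x
    have h2 := hvx v
    simp only [hκ, hq'def, hB, map_sub, map_smul, smul_eq_mul, LinearMap.sub_apply,
      LinearMap.smul_apply]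
    rw [hBs x v]
    linear_combination (-2 * s) * h1
  set S := ∫⁻ s : ℝ, ENNReal.ofReal (rexp (-s ^ 2)) with hS
  have hS0 : S ≠ 0 := by
    rw [hS, Ne, lintegral_eq_zero_iff (by fun_prop)]
    intro h
    obtain ⟨x, hx⟩ := h.exists
    simp only [Pi.zero_apply, ENNReal.ofReal_eq_zero] at hx
    exact absurd (exp_pos _) (not_lt.2 hx)
  have hSt : S ≠ ⊤ := by
    have := (integrable_exp_neg_mul_sq (b := 1) one_pos).lintegral_lt_top
    simpa [hS] using this.ne
  set W := ∫⁻ s : ℝ, ENNReal.ofReal (rexp (-(κ * s ^ 2))) with hW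
  have hq'm := hq'.measurable
  have hqm := hq.measurable
  have disint : ∀ G : (Fin n → ℝ) → ENNReal, Measurable G →
      S * ∫⁻ x, gw q x * G x
        = ∫⁻ s : ℝ, ENNReal.ofReal (rexp (-(κ * s ^ 2))) * ∫⁻ x, gw q' (x - s • v) * G x := by
    intro G hGm
    calc S * ∫⁻ x, gw q x * G x = ∫⁻ x, (∫⁻ s : ℝ, gw q x * ENNReal.ofReal (rexp (-(s - l x) ^ 2))) * G x := by
          rw [← lintegral_const_mul' _ _ hSt]
          congr with x
          rw [lintegral_const_mul' _ _ (by simp [gw]),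
            lintegral_sub_right_eq_self (fun s => ENNReal.ofReal (rexp (-s ^ 2)))]
          ring
      _ = ∫⁻ x, ∫⁻ s : ℝ, ENNReal.ofReal (rexp (-(κ * s ^ 2))) * (gw q' (x - s • v) * G x) := by
          congr with x
          rw [← lintegral_mul_const _ (by fun_prop)]
          congr with s
          rw [← mul_assoc]
          congr 1
          simp only [gw]
          rw [← ENNReal.ofReal_mul (exp_nonneg _), ← ENNReal.ofReal_mul (exp_nonneg _), ← exp_add,
            ← exp_add]
          congr 2
          linarith [hsq x s]
      _ = ∫⁻ s : ℝ, ∫⁻ x, ENNReal.ofReal (rexp (-(κ * s ^ 2))) * (gw q' (x - s • v) * G x) := by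
          rw [lintegral_lintegral_swap]
          unfold gw
          fun_prop
      _ = _ := by
          congr with s
          rw [lintegral_const_mul' _ _ (by simp)]
  have e1 : S * ∫⁻ x, gw q x * G x ≤ W * ∫⁻ x, gw q' x * G x := by
    rw [disint G hG.meas, hW, ← lintegral_mul_const _ (by fun_prop)]
    refine lintegral_mono fun s => mul_le_mul_right (anderson ?_ hG (s • v)) _
    exact hq'.isEvenLogConcave
  have e2 : S * ∫⁻ x, gw q x = W * ∫⁻ x, gw q' x := by
    have := disint (fun _ => 1) measurable_const
    simp only [mul_one] at this
    rw [this, hW, ← lintegral_mul_const _ (by fun_prop)]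
    congr with s
    rw [lintegral_sub_right_eq_self (gw q')]
  rw [← ENNReal.mul_le_mul_iff_right hS0 hSt]
  calc S * ((∫⁻ x, gw q' x) * ∫⁻ x, gw q x * G x) = (∫⁻ x, gw q' x) * (S * ∫⁻ x, gw q x * G x) := by ring
    _ ≤ (∫⁻ x, gw q' x) * (W * ∫⁻ x, gw q' x * G x) := by gcongr
    _ = (W * ∫⁻ x, gw q' x) * ∫⁻ x, gw q' x * G x := by ring
    _ = _ := by rw [← e2]; ring

/-! ### The Gaussian correlation inequality -/

/-- Measurable nonnegative functions that are even and quasi-concave, the latter stated through strict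
superlevel sets. -/
structure IsEvenQuasiConcave {V : Type*} [AddCommGroup V] [Module ℝ V] [MeasurableSpace V]
    (h : V → ℝ) : Prop where
  meas : Measurable h
  nonneg : ∀ x, 0 ≤ h x
  even : ∀ x, h (-x) = h x
  conv : ∀ t : ℝ, Convex ℝ {x | t < h x}

lemma IsEvenQuasiConcave.comp {V W : Type*} [AddCommGroup V] [Module ℝ V] [MeasurableSpace V]
    [AddCommGroup W] [Module ℝ W] [MeasurableSpace W] {h : V → ℝ} (hh : IsEvenQuasiConcave h)
    (A : W →ₗ[ℝ] V) (hA : Measurable A) : IsEvenQuasiConcave (fun x => h (A x)) where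
  meas := hh.meas.comp hA
  nonneg x := hh.nonneg _
  even x := by rw [map_neg, hh.even]
  conv t := (hh.conv t).linear_preimage A

/-- The layer-cake formula against the density `Φ`. -/
lemma lintegral_mul_layercake {n : ℕ} {Φ : (Fin n → ℝ) → ENNReal} (hΦ : Measurable Φ)
    {h : (Fin n → ℝ) → ℝ} (hh : Measurable h) (h0 : ∀ x, 0 ≤ h x) :
    ∫⁻ x, Φ x * ENNReal.ofReal (h x)
      = ∫⁻ t in Set.Ioi (0:ℝ), ∫⁻ x, Φ x * Set.indicator {x | t < h x} 1 x := by
  have h1 := lintegral_eq_lintegral_meas_lt (volume.withDensity Φ) (.of_forall h0) hh.aemeasurable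
  rw [lintegral_withDensity_eq_lintegral_mul _ hΦ (by fun_prop)] at h1
  simp only [Pi.mul_apply] at h1
  rw [h1]
  congr with t
  have hm : MeasurableSet {x | t < h x} := measurableSet_lt measurable_const hh
  rw [withDensity_apply _ hm, ← lintegral_indicator hm]
  congr with x
  by_cases hx : t < h x <;> simp [Set.indicator, hx]

/-- Extension of `gaussian_correlation_sq` to products of even quasi-concave functions: by the
layer-cake formula each factor is a mixture of indicators of symmetric convex sets, and these are
absorbed one at a time into the log-concave function `G`. -/
lemma gaussian_correlation_sq_prod {n : ℕ} {q : (Fin n → ℝ) → ℝ} (hq : IsSOS q)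
    (hpos : ∀ x, q x = 0 → x = 0) (hfin : ∫⁻ x, gw q x ≠ ⊤) (l : (Fin n → ℝ) →ₗ[ℝ] ℝ)
    {ι : Type*} (s : Finset ι) {h : ι → (Fin n → ℝ) → ℝ} (hh : ∀ i ∈ s, IsEvenQuasiConcave (h i))
    {G : (Fin n → ℝ) → ENNReal} (hG : IsEvenLogConcave G) :
    (∫⁻ x, gw (fun x => q x + l x ^ 2) x) * ∫⁻ x, gw q x * (G x * ∏ i ∈ s, ENNReal.ofReal (h i x))
      ≤ (∫⁻ x, gw q x) *
        ∫⁻ x, gw (fun x => q x + l x ^ 2) x * (G x * ∏ i ∈ s, ENNReal.ofReal (h i x)) := by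
  classical
  have hq' : IsSOS (fun x => q x + l x ^ 2) := hq.add_sq l
  have hfin' : ∫⁻ x, gw (fun x => q x + l x ^ 2) x ≠ ⊤ := by
    refine ne_top_of_le_ne_top hfin (lintegral_mono fun x => ?_)
    refine ENNReal.ofReal_le_ofReal (exp_le_exp.2 ?_)
    nlinarith [sq_nonneg (l x)]
  induction s using Finset.induction generalizing G with
  | empty => simpa using gaussian_correlation_sq hq hpos l hG
  | insert a s ha ih =>
    have hGm := hG.meas
    have ham := (hh a (by simp)).meas
    have hsm : Measurable fun x => ∏ i ∈ s, ENNReal.ofReal (h i x) :=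
      Finset.measurable_fun_prod _ fun i hi => ENNReal.measurable_ofReal.comp (hh i (by simp [hi])).meas
    have key : ∀ r : (Fin n → ℝ) → ℝ, IsSOS r →
        ∫⁻ x, gw r x * (G x * ∏ i ∈ insert a s, ENNReal.ofReal (h i x))
        = ∫⁻ t in Set.Ioi (0:ℝ), ∫⁻ x, gw r x *
            ((G x * Set.indicator {x | t < h a x} 1 x) * ∏ i ∈ s, ENNReal.ofReal (h i x)) := by
      intro r hr
      have hrm : Measurable (gw r) := by have := hr.measurable; unfold gw; fun_prop
      calc _ = ∫⁻ x, (gw r x * (G x * ∏ i ∈ s, ENNReal.ofReal (h i x))) * ENNReal.ofReal (h a x) := by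
            congr with x
            rw [Finset.prod_insert ha]; ring
        _ = _ := by
            rw [lintegral_mul_layercake (by fun_prop) ham (hh a (by simp)).nonneg]
            congr with t
            congr with x
            ring
    rw [key _ hq, key _ hq', ← lintegral_const_mul' _ _ hfin, ← lintegral_const_mul' _ _ hfin']
    refine lintegral_mono fun t => ?_
    have hK := IsEvenLogConcave.indicator (K := {x | t < h a x})
      (measurableSet_lt measurable_const ham) (fun x => by simp [(hh a (by simp)).even])
      ((hh a (by simp)).conv t)
    exact ih (fun i hi => hh i (by simp [hi])) (hG.mul hK)

/-- Gaussian correlation inequality for a sum of squares `a`, whose squares are added one by one; the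
intermediate normalising constants cancel. -/
lemma gaussian_correlation {n : ℕ} {q : (Fin n → ℝ) → ℝ} (hq : IsSOS q)
    (hpos : ∀ x, q x = 0 → x = 0) (hfin : ∫⁻ x, gw q x ≠ ⊤) {a : (Fin n → ℝ) → ℝ} (ha : IsSOS a)
    {ι : Type*} (s : Finset ι) {h : ι → (Fin n → ℝ) → ℝ} (hh : ∀ i ∈ s, IsEvenQuasiConcave (h i))
    {G : (Fin n → ℝ) → ENNReal} (hG : IsEvenLogConcave G) :
    (∫⁻ x, gw (fun x => q x + a x) x) * ∫⁻ x, gw q x * (G x * ∏ i ∈ s, ENNReal.ofReal (h i x))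
      ≤ (∫⁻ x, gw q x) *
        ∫⁻ x, gw (fun x => q x + a x) x * (G x * ∏ i ∈ s, ENNReal.ofReal (h i x)) := by
  induction ha with
  | zero => simp
  | @add_sq a l ha ih =>
    have hqa := hq.add ha
    have hfin' : ∫⁻ x, gw (fun x => q x + a x) x ≠ ⊤ := by
      refine ne_top_of_le_ne_top hfin (lintegral_mono fun x => ?_)
      exact ENNReal.ofReal_le_ofReal (exp_le_exp.2 (by linarith [ha.nonneg x]))
    have h0 : ∫⁻ x, gw (fun x => q x + a x) x ≠ 0 := by
      have := hqa.measurable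
      rw [Ne, lintegral_eq_zero_iff (by unfold gw; fun_prop)]
      intro h
      obtain ⟨x, hx⟩ := h.exists
      simp only [gw, Pi.zero_apply, ENNReal.ofReal_eq_zero] at hx
      exact absurd (exp_pos _) (not_lt.2 hx)
    have step := gaussian_correlation_sq_prod hqa (fun x hx => hpos x
      (by linarith [hq.nonneg x, ha.nonneg x])) hfin' l s hh hG
    simp only [add_assoc] at step
    rw [← ENNReal.mul_le_mul_iff_right h0 hfin']
    set X0 := ∫⁻ x, gw q x
    set X1 := ∫⁻ x, gw (fun x => q x + a x) x
    set X2 := ∫⁻ x, gw (fun x => q x + (a x + l x ^ 2)) x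
    set Y0 := ∫⁻ x, gw q x * (G x * ∏ i ∈ s, ENNReal.ofReal (h i x))
    set Y1 := ∫⁻ x, gw (fun x => q x + a x) x * (G x * ∏ i ∈ s, ENNReal.ofReal (h i x))
    set Y2 := ∫⁻ x, gw (fun x => q x + (a x + l x ^ 2)) x * (G x * ∏ i ∈ s, ENNReal.ofReal (h i x))
    calc X1 * (X2 * Y0) = X2 * (X1 * Y0) := by ring
      _ ≤ X2 * (X0 * Y1) := by gcongr
      _ = X0 * (X2 * Y1) := by ring
      _ ≤ X0 * (X1 * Y2) := by gcongr
      _ = X1 * (X0 * Y2) := by ring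

/-! ### Gaussian vectors on path space -/

lemma pi_gaussianReal_eq_withDensity (n : ℕ) :
    Measure.pi (fun _ : Fin n => gaussianReal 0 1)
      = (volume : Measure (Fin n → ℝ)).withDensity
        (fun x => ENNReal.ofReal (∏ i, gaussianPDFReal 0 1 (x i))) := by
  refine Measure.pi_eq fun s hs => ?_
  have hi : ∀ i, Integrable (gaussianPDFReal 0 1) (volume.restrict (s i)) := fun i =>
    (integrable_gaussianPDFReal 0 1).restrict
  rw [withDensity_apply _ (MeasurableSet.univ_pi hs), volume_pi, Measure.restrict_pi_pi,
    ← ofReal_integral_eq_lintegral_ofReal (Integrable.fintype_prod hi)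
      (.of_forall fun x => Finset.prod_nonneg fun i _ => gaussianPDFReal_nonneg _ _ _),
    integral_fintype_prod_eq_prod (f := fun _ => gaussianPDFReal 0 1), ENNReal.ofReal_prod_of_nonneg
      (fun i _ => integral_nonneg fun x => gaussianPDFReal_nonneg _ _ _)]
  simp_rw [gaussianReal_apply_eq_integral 0 (one_ne_zero) _]

/-- The standard Gaussian measure on `ℝⁿ` is a constant multiple of `gw (‖·‖² / 2)`. Only the
existence of the constant matters, the inequalities below being homogeneous. -/
lemma lintegral_pi_gaussianReal (n : ℕ) :
    ∃ c : ENNReal, c ≠ 0 ∧ c ≠ ⊤ ∧ ∀ Φ : (Fin n → ℝ) → ENNReal, Measurable Φ →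
      ∫⁻ x, Φ x ∂(Measure.pi (fun _ : Fin n => gaussianReal 0 1))
        = c * ∫⁻ x, gw (fun x => ∑ i, (1/2) * x i ^ 2) x * Φ x := by
  have h2 : 0 < (√(2 * π))⁻¹ ^ n := by positivity
  refine ⟨ENNReal.ofReal ((√(2 * π))⁻¹ ^ n), (ENNReal.ofReal_pos.2 h2).ne', ENNReal.ofReal_ne_top,
    fun Φ hΦ => ?_⟩
  have hm : Measurable fun x : Fin n → ℝ => gw (fun x => ∑ i, (1/2) * x i ^ 2) x := by
    unfold gw; fun_prop
  have hd : (fun x : Fin n → ℝ => ENNReal.ofReal (∏ i, gaussianPDFReal 0 1 (x i)))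
      = fun x => ENNReal.ofReal ((√(2 * π))⁻¹ ^ n) * gw (fun x => ∑ i, (1/2) * x i ^ 2) x := by
    funext x
    rw [gw, ← ENNReal.ofReal_mul h2.le]
    congr 1
    simp only [gaussianPDFReal, NNReal.coe_one, mul_one, sub_zero, Finset.prod_mul_distrib,
      Finset.prod_const, Finset.card_univ, Fintype.card_fin, ← exp_sum, ← Finset.sum_neg_distrib]
    congr 3; funext i; ring
  rw [pi_gaussianReal_eq_withDensity, hd, lintegral_withDensity_eq_lintegral_mul _ (by fun_prop) hΦ,
    ← lintegral_const_mul _ (by fun_prop)]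
  simp only [Pi.mul_apply, mul_assoc]

lemma IsSOS.measurable' {ι : Type*} [Fintype ι] {q : EuclideanSpace ℝ ι → ℝ} (hq : IsSOS q) :
    Measurable q := by
  induction hq with
  | zero => fun_prop
  | add_sq l _ ih =>
    have : Measurable l := l.continuous_of_finiteDimensional.measurable
    fun_prop

/-- The Gaussian correlation inequality under the standard Gaussian measure on `ℝⁿ`. -/
lemma gaussian_correlation_pi {n : ℕ} {r a b : (Fin n → ℝ) → ℝ} (hr : IsSOS r) (ha : IsSOS a)
    (hb : IsSOS b) {ι : Type*} (s : Finset ι) {h : ι → (Fin n → ℝ) → ℝ}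
    (hh : ∀ i ∈ s, IsEvenQuasiConcave (h i)) :
    let μ := Measure.pi (fun _ : Fin n => gaussianReal 0 1)
    (∫⁻ x, gw (fun x => r x + a x) x ∂μ) * ∫⁻ x, gw r x * (gw b x * ∏ i ∈ s, ENNReal.ofReal (h i x)) ∂μ
      ≤ (∫⁻ x, gw r x ∂μ) *
        ∫⁻ x, gw (fun x => r x + a x) x * (gw b x * ∏ i ∈ s, ENNReal.ofReal (h i x)) ∂μ := by
  intro μ
  obtain ⟨c, hc0, hct, hc⟩ := lintegral_pi_gaussianReal n
  set q0 : (Fin n → ℝ) → ℝ := fun x => ∑ i, (1/2) * x i ^ 2 with hq0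
  have hq0S : IsSOS q0 := IsSOS.sum _ fun i _ =>
    (IsSOS.sq (LinearMap.proj i : (Fin n → ℝ) →ₗ[ℝ] ℝ)).const_mul (by norm_num)
  have hg : ∀ {p : (Fin n → ℝ) → ℝ}, IsSOS p → Measurable (gw p) := fun hp => by
    have := hp.measurable; unfold gw; fun_prop
  have hgm : ∀ p p' x, gw p x * gw p' x = gw (n := n) (fun x => p x + p' x) x := fun p p' x => by
    rw [gw, gw, gw, ← ENNReal.ofReal_mul (exp_nonneg _), ← exp_add, neg_add]
  have hP : Measurable fun x => ∏ i ∈ s, ENNReal.ofReal (h i x) :=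
    Finset.measurable_fun_prod _ fun i hi => (hh i hi).meas.ennreal_ofReal
  have hq := hq0S.add hr
  have hqa := hq.add ha
  have hgb := hg hb; have hgr := hg hr; have hgra := hg (hr.add ha)
  have hfin : ∫⁻ x, gw (fun x => q0 x + r x) x ≠ ⊤ := by
    have h1 : c * ∫⁻ x, gw q0 x * 1 = 1 := by rw [← hc _ measurable_const]; simp
    refine ne_top_of_le_ne_top (b := ∫⁻ x, gw q0 x * 1) ?_ (lintegral_mono fun x => ?_)
    · intro h; rw [h, ENNReal.mul_top hc0] at h1; simp at h1
    · rw [mul_one]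
      refine ENNReal.ofReal_le_ofReal (exp_le_exp.2 ?_)
      linarith [hr.nonneg x]
  have hpos : ∀ x, q0 x + r x = 0 → x = 0 := fun x hx => by
    have h1 : q0 x = 0 := le_antisymm (by linarith [hr.nonneg x]) (hq0S.nonneg x)
    rw [hq0, Finset.sum_eq_zero_iff_of_nonneg (fun i _ => by positivity)] at h1
    funext i; simpa using h1 i
  have key := gaussian_correlation hq hpos hfin ha s hh hb.isEvenLogConcave
  rw [hc _ hgra, hc _ (by fun_prop), hc _ hgr, hc _ (by fun_prop)]
  have e1 : ∀ x, gw q0 x * gw (fun x => r x + a x) x = gw (fun x => q0 x + r x + a x) x :=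
    fun x => by rw [hgm]; simp only [add_assoc]
  simp only [← mul_assoc (gw q0 _), e1, hgm q0 r]
  change _ ≤ _ at key
  set I1 := ∫⁻ x, gw (fun x => q0 x + r x + a x) x
  set I2 := ∫⁻ x, gw (fun x => q0 x + r x) x
  set I3 := ∫⁻ x, gw (fun x => q0 x + r x) x * (gw b x * ∏ i ∈ s, ENNReal.ofReal (h i x))
  set I4 := ∫⁻ x, gw (fun x => q0 x + r x + a x) x * (gw b x * ∏ i ∈ s, ENNReal.ofReal (h i x))
  calc c * I1 * (c * I3) = c * c * (I1 * I3) := by ring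
    _ ≤ c * c * (I2 * I4) := by exact mul_le_mul' le_rfl key
    _ = c * I2 * (c * I4) := by ring

open Matrix MatrixOrder in
/-- A centred Gaussian law, possibly degenerate, is a linear image of a standard Gaussian. -/
lemma exists_map_eq {ι : Type*} [Fintype ι] (ν : Measure (EuclideanSpace ℝ ι)) [IsGaussian ν]
    (h0 : ν[id] = 0) : ∃ (n : ℕ) (B : (Fin n → ℝ) →ₗ[ℝ] EuclideanSpace ℝ ι),
      ν = (Measure.pi (fun _ : Fin n => gaussianReal 0 1)).map B := by
  classical
  set S : Matrix ι ι ℝ := Matrix.of fun i j =>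
    covarianceBilin ν (EuclideanSpace.basisFun ι ℝ i) (EuclideanSpace.basisFun ι ℝ j)
  have hx : ∀ x y : EuclideanSpace ℝ ι, covarianceBilin ν x y = x ⬝ᵥ S *ᵥ y := fun x y => by
    conv_lhs => rw [← (EuclideanSpace.basisFun ι ℝ).sum_repr x,
      ← (EuclideanSpace.basisFun ι ℝ).sum_repr y]
    simp [S, dotProduct, mulVec, Finset.mul_sum, mul_left_comm]
    rw [Finset.sum_comm]
    exact Finset.sum_congr rfl fun i _ => Finset.sum_congr rfl fun j _ => by ring
  have hS : S.PosSemidef := by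
    refine Matrix.PosSemidef.of_dotProduct_mulVec_nonneg ?_ fun x => ?_
    · ext i j; simp [S, covarianceBilin_comm]
    · have := hx (WithLp.toLp 2 x) (WithLp.toLp 2 x)
      simp at this ⊢
      rw [← this]
      exact covarianceBilin_self_nonneg _
  have hν : ν = multivariateGaussian 0 S := by
    refine IsGaussian.ext ?_ ?_
    · rw [h0]; simp
    · ext x y; rw [covarianceBilin_multivariateGaussian hS, hx]
  refine ⟨Module.finrank ℝ (EuclideanSpace ℝ ι), (toEuclideanCLM (𝕜 := ℝ) (CFC.sqrt S)).toLinearMap ∘ₗ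
    (∑ i, (LinearMap.proj i : (Fin _ → ℝ) →ₗ[ℝ] ℝ).smulRight
      (stdOrthonormalBasis ℝ (EuclideanSpace ℝ ι) i)), ?_⟩
  rw [hν, multivariateGaussian, stdGaussian, Measure.map_map (by fun_prop) (by fun_prop)]
  congr 1
  funext x
  simp

/-- The Gaussian correlation inequality for a finite-dimensional linear image `X` of the path.
The law of `X` may be degenerate, so it is written as a linear image of a standard Gaussian. -/
lemma gaussian_correlation_path {d : ℕ} {P : Measure (PathSpace d)} [IsProbabilityMeasure P]
    (hP : ∀ L : PathSpace d →L[ℝ] ℝ, ∃ v : NNReal, P.map L = gaussianReal 0 v)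
    {ι : Type*} [Fintype ι] (X : PathSpace d →L[ℝ] EuclideanSpace ℝ ι)
    {r a b : EuclideanSpace ℝ ι → ℝ} (hr : IsSOS r) (ha : IsSOS a) (hb : IsSOS b)
    {κ : Type*} (s : Finset κ) {h : κ → EuclideanSpace ℝ ι → ℝ}
    (hh : ∀ i ∈ s, IsEvenQuasiConcave (h i)) (h1 : ∀ i ∈ s, ∀ x, h i x ≤ 1) :
    (∫ ω, rexp (-(r (X ω) + a (X ω))) ∂P) *
        ∫ ω, rexp (-r (X ω)) * (rexp (-b (X ω)) * ∏ i ∈ s, h i (X ω)) ∂P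
      ≤ (∫ ω, rexp (-r (X ω)) ∂P) *
        ∫ ω, rexp (-(r (X ω) + a (X ω))) * (rexp (-b (X ω)) * ∏ i ∈ s, h i (X ω)) ∂P := by
  have hXm : Measurable X := X.continuous.measurable
  have hG : IsGaussian (P.map X) := isGaussian_of_map_eq_gaussianReal fun L => by
    obtain ⟨v, hv⟩ := hP (L ∘L X)
    refine ⟨0, v, ?_⟩
    rw [Measure.map_map (by fun_prop) hXm, ← hv]; rfl
  have h0 : (P.map X)[id] = 0 := by
    refine ext_inner_left ℝ fun y => ?_
    rw [← integral_inner IsGaussian.integrable_id, inner_zero_right]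
    obtain ⟨v, hv⟩ := hP (innerSL ℝ y ∘L X)
    have := integral_id_gaussianReal (μ := 0) (v := v)
    rw [← hv, integral_map (by fun_prop) (by fun_prop)] at this
    rw [integral_map (by fun_prop) (by fun_prop)]
    simpa using this
  obtain ⟨n, B, hB⟩ := exists_map_eq _ h0
  have hBm : Measurable B := B.continuous_of_finiteDimensional.measurable
  have hrm := hr.measurable'; have ham := ha.measurable'; have hbm := hb.measurable'
  have hPm : Measurable fun x => ∏ i ∈ s, h i x :=
    Finset.measurable_fun_prod _ fun i hi => (hh i hi).meas
  have hP0 : ∀ x, 0 ≤ ∏ i ∈ s, h i x := fun x => Finset.prod_nonneg fun i hi => (hh i hi).nonneg x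
  have hP1 : ∀ x, ∏ i ∈ s, h i x ≤ 1 := fun x =>
    Finset.prod_le_one (fun i hi => (hh i hi).nonneg x) fun i hi => h1 i hi x
  have he : ∀ {q : EuclideanSpace ℝ ι → ℝ}, IsSOS q → ∀ x, rexp (-q x) ≤ 1 := fun hq x =>
    exp_le_one_iff.2 (by linarith [hq.nonneg x])
  have key := gaussian_correlation_pi (hr.comp B) (ha.comp B) (hb.comp B) s
    (h := fun i x => h i (B x)) (fun i hi => (hh i hi).comp B hBm)
  -- every expectation is the real value of a finite lower integral against the Gaussian on `ℝⁿ`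
  have conv : ∀ {φ : EuclideanSpace ℝ ι → ℝ}, Measurable φ → (∀ x, 0 ≤ φ x) →
      ∫ ω, φ (X ω) ∂P = (∫⁻ x, ENNReal.ofReal (φ (B x))
        ∂(Measure.pi fun _ : Fin n => gaussianReal 0 1)).toReal := fun {φ} hφ hφ0 => by
    rw [← integral_map hXm.aemeasurable hφ.aestronglyMeasurable, hB,
      integral_map hBm.aemeasurable hφ.aestronglyMeasurable,
      integral_eq_lintegral_of_nonneg_ae (.of_forall fun x => hφ0 _)
        (hφ.comp hBm).aestronglyMeasurable]
  have fin : ∀ {φ : EuclideanSpace ℝ ι → ℝ}, (∀ x, φ x ≤ 1) →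
      ∫⁻ x, ENNReal.ofReal (φ (B x)) ∂(Measure.pi fun _ : Fin n => gaussianReal 0 1) ≠ ⊤ :=
    fun {φ} hφ => ne_top_of_le_ne_top (b := 1) (by simp) <| by
      calc _ ≤ ∫⁻ x, 1 ∂(Measure.pi fun _ : Fin n => gaussianReal 0 1) :=
            lintegral_mono fun x => ENNReal.ofReal_le_one.2 (hφ _)
        _ = 1 := by simp
  have c0 : ∀ x, 0 ≤ rexp (-b x) * ∏ i ∈ s, h i x := fun x =>
    mul_nonneg (exp_nonneg _) (hP0 x)
  have c1 : ∀ x, rexp (-b x) * ∏ i ∈ s, h i x ≤ 1 := fun x =>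
    mul_le_one₀ (he hb x) (hP0 x) (hP1 x)
  rw [conv (φ := fun x => rexp (-(r x + a x))) (by fun_prop) (fun x => exp_nonneg _),
    conv (φ := fun x => rexp (-r x)) (by fun_prop) (fun x => exp_nonneg _),
    conv (φ := fun x => rexp (-r x) * (rexp (-b x) * ∏ i ∈ s, h i x)) (by fun_prop)
      (fun x => mul_nonneg (exp_nonneg _) (c0 x)),
    conv (φ := fun x => rexp (-(r x + a x)) * (rexp (-b x) * ∏ i ∈ s, h i x)) (by fun_prop)
      (fun x => mul_nonneg (exp_nonneg _) (c0 x)), ← ENNReal.toReal_mul, ← ENNReal.toReal_mul]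
  refine ENNReal.toReal_mono (ENNReal.mul_ne_top (fin (he hr))
    (fin fun x => mul_le_one₀ (he (hr.add ha) x) (c0 x) (c1 x))) ?_
  have hp : ∀ x, ENNReal.ofReal (∏ i ∈ s, h i (B x)) = ∏ i ∈ s, ENNReal.ofReal (h i (B x)) :=
    fun x => ENNReal.ofReal_prod_of_nonneg fun i hi => (hh i hi).nonneg _
  simp only [gw] at key
  simpa only [ENNReal.ofReal_mul (exp_nonneg _), hp] using key

/-! ### The four functions argument -/

/-- The inequality `E[e^{-q} F] * E[F G] ≤ E[F] * E[e^{-q} F G]`: under the measure of density `F`, the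
functions `e^{-q}` and `G` are positively correlated. -/
def CorrIneq {Ω : Type*} [MeasurableSpace Ω] (P : Measure Ω) (q F G : Ω → ℝ) : Prop :=
  (∫ ω, rexp (-q ω) * F ω ∂P) * ∫ ω, F ω * G ω ∂P
    ≤ (∫ ω, F ω ∂P) * ∫ ω, rexp (-q ω) * (F ω * G ω) ∂P

/-- `CorrIneq` passes to bounded pointwise limits. -/
lemma CorrIneq.of_tendsto {Ω : Type*} [MeasurableSpace Ω] {P : Measure Ω} [IsProbabilityMeasure P]
    {q F G : Ω → ℝ} {Fn Gn : ℕ → Ω → ℝ} {C : ℝ} (hq : Measurable q) (hq0 : ∀ ω, 0 ≤ q ω)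
    (hFm : ∀ n, Measurable (Fn n)) (hGm : ∀ n, Measurable (Gn n))
    (hF0 : ∀ n ω, 0 ≤ Fn n ω) (hG0 : ∀ n ω, 0 ≤ Gn n ω)
    (hFC : ∀ n ω, Fn n ω ≤ C) (hG1 : ∀ n ω, Gn n ω ≤ 1)
    (hF : ∀ ω, Tendsto (fun n => Fn n ω) atTop (𝓝 (F ω)))
    (hG : ∀ ω, Tendsto (fun n => Gn n ω) atTop (𝓝 (G ω)))
    (h : ∀ n, CorrIneq P q (Fn n) (Gn n)) : CorrIneq P q F G := by
  have he : ∀ ω, rexp (-q ω) ≤ 1 := fun ω => exp_le_one_iff.2 (by linarith [hq0 ω])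
  have key : ∀ {f : Ω → ℝ} {fn : ℕ → Ω → ℝ}, (∀ n, Measurable (fn n)) → (∀ n ω, 0 ≤ fn n ω) →
      (∀ n ω, fn n ω ≤ C) → (∀ ω, Tendsto (fun n => fn n ω) atTop (𝓝 (f ω))) →
      Tendsto (fun n => ∫ ω, fn n ω ∂P) atTop (𝓝 (∫ ω, f ω ∂P)) := fun {f fn} h1 h2 h3 h4 =>
    tendsto_integral_of_dominated_convergence (fun _ => C)
      (fun n => (h1 n).aestronglyMeasurable) (integrable_const _)
      (fun n => .of_forall fun ω => by rw [norm_of_nonneg (h2 n ω)]; exact h3 n ω)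
      (.of_forall h4)
  have hFG : ∀ n ω, Fn n ω * Gn n ω ≤ C := fun n ω =>
    (mul_le_of_le_one_right (hF0 n ω) (hG1 n ω)).trans (hFC n ω)
  refine le_of_tendsto_of_tendsto' ((key (fun n => ?_) (fun n ω => ?_) (fun n ω => ?_)
    fun ω => (hF ω).const_mul _).mul (key (fun n => ?_) (fun n ω => ?_) hFG
    fun ω => (hF ω).mul (hG ω))) ((key hFm hF0 hFC hF).mul (key (fun n => ?_) (fun n ω => ?_)
    (fun n ω => ?_) fun ω => ((hF ω).mul (hG ω)).const_mul _)) h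
  · have := hFm n; fun_prop
  · exact mul_nonneg (exp_nonneg _) (hF0 n ω)
  · exact (mul_le_of_le_one_left (hF0 n ω) (he ω)).trans (hFC n ω)
  · exact (hFm n).mul (hGm n)
  · exact mul_nonneg (hF0 n ω) (hG0 n ω)
  · have := hFm n; have := hGm n; fun_prop
  · exact mul_nonneg (exp_nonneg _) (mul_nonneg (hF0 n ω) (hG0 n ω))
  · exact (mul_le_of_le_one_left (mul_nonneg (hF0 n ω) (hG0 n ω)) (he ω)).trans (hFG n ω)

lemma CorrIneq.scale {Ω : Type*} [MeasurableSpace Ω] {P : Measure Ω} {q F F' G : Ω → ℝ} {c : ℝ}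
    (hc : 0 < c) (h : CorrIneq P q F' G) (hF : ∀ ω, F' ω = c * F ω) : CorrIneq P q F G := by
  unfold CorrIneq at *
  simp only [hF, mul_assoc, mul_left_comm _ c, integral_const_mul] at h
  have : (c * c) * ((∫ ω, rexp (-q ω) * F ω ∂P) * ∫ ω, F ω * G ω ∂P)
    ≤ (c * c) * ((∫ ω, F ω ∂P) * ∫ ω, rexp (-q ω) * (F ω * G ω) ∂P) := by linarith
  exact le_of_mul_le_mul_left this (by positivity)

section Grid

variable {d : ℕ} {P : Measure (PathSpace d)} [IsProbabilityMeasure P]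
  (hP : ∀ L : PathSpace d →L[ℝ] ℝ, ∃ v : NNReal, P.map L = gaussianReal 0 v)
  {ι : Type*} [Fintype ι] (X : PathSpace d →L[ℝ] EuclideanSpace ℝ ι)
  {q : EuclideanSpace ℝ ι → ℝ} (hq : IsSOS q)
  {J : Type*} (s : Finset J) {h : J → EuclideanSpace ℝ ι → ℝ}
  (hh : ∀ i ∈ s, IsEvenQuasiConcave (h i)) (h1 : ∀ i ∈ s, ∀ x, h i x ≤ 1)
include hP hq hh h1

/-- `CorrIneq` for products `∏ (1 + c_k e^{-p_k})`: the four functions theorem on the lattice of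
subsets of `κ`, whose hypothesis is the Gaussian correlation inequality. -/
lemma corrIneq_prod {κ : Type*} [Fintype κ] {p : κ → EuclideanSpace ℝ ι → ℝ}
    (hp : ∀ k, IsSOS (p k)) {c : κ → ℝ} (hc : ∀ k, 0 ≤ c k) :
    CorrIneq P (fun ω => q (X ω)) (fun ω => ∏ k, (1 + c k * rexp (-p k (X ω))))
      (fun ω => ∏ i ∈ s, h i (X ω)) := by
  classical
  have hXm : Measurable X := X.continuous.measurable
  have hpS : ∀ S : Finset κ, IsSOS (fun x => ∑ k ∈ S, p k x) := fun S => IsSOS.sum _ fun k _ => hp k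
  set G : PathSpace d → ℝ := fun ω => ∏ i ∈ s, h i (X ω) with hGdef
  have hGm : Measurable G := Finset.measurable_fun_prod _ fun i hi => (hh i hi).meas.comp hXm
  have hG0 : ∀ ω, 0 ≤ G ω := fun ω => Finset.prod_nonneg fun i hi => (hh i hi).nonneg _
  have hG1 : ∀ ω, G ω ≤ 1 := fun x =>
    Finset.prod_le_one (fun i hi => (hh i hi).nonneg _) fun i hi => h1 i hi _
  have hF : ∀ ω, ∏ k, (1 + c k * rexp (-p k (X ω)))
      = ∑ S : Finset κ, (∏ k ∈ S, c k) * rexp (-∑ k ∈ S, p k (X ω)) := fun ω => by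
    rw [Finset.prod_one_add, Finset.powerset_univ]
    refine Finset.sum_congr rfl fun S _ => ?_
    rw [Finset.prod_mul_distrib, ← exp_sum, Finset.sum_neg_distrib]
  have hint : ∀ {r : EuclideanSpace ℝ ι → ℝ} {g : PathSpace d → ℝ}, IsSOS r → Measurable g →
      (∀ ω, 0 ≤ g ω) → (∀ ω, g ω ≤ 1) → Integrable (fun ω => rexp (-r (X ω)) * g ω) P :=
    fun {r g} hr hg hg0 hg1 => by
      have := hr.measurable'
      refine Integrable.of_bound (C := 1) (by fun_prop) (.of_forall fun ω => ?_)
      rw [norm_of_nonneg (mul_nonneg (exp_nonneg _) (hg0 ω))]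
      exact mul_le_one₀ (exp_le_one_iff.2 (by linarith [hr.nonneg (X ω)])) (hg0 ω) (hg1 ω)
  have hsum : ∀ {r : EuclideanSpace ℝ ι → ℝ} {g : PathSpace d → ℝ}, IsSOS r → Measurable g →
      (∀ ω, 0 ≤ g ω) → (∀ ω, g ω ≤ 1) →
      ∫ ω, rexp (-r (X ω)) * ((∏ k, (1 + c k * rexp (-p k (X ω)))) * g ω) ∂P
        = ∑ S : Finset κ, (∏ k ∈ S, c k) *
          ∫ ω, rexp (-(r (X ω) + ∑ k ∈ S, p k (X ω))) * g ω ∂P := fun {r g} hr hg hg0 hg1 => by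
    simp_rw [hF, Finset.sum_mul, Finset.mul_sum]
    rw [integral_finsetSum]
    · refine Finset.sum_congr rfl fun S _ => ?_
      rw [← integral_const_mul]
      congr with ω
      rw [neg_add, exp_add]; ring
    · intro S _
      convert (hint (hr.add (hpS S)) hg hg0 hg1).const_mul (∏ k ∈ S, c k) using 2 with ω
      rw [neg_add, exp_add]; ring
  have s1 := hsum (g := fun _ => 1) hq measurable_const (by simp) (by simp)
  have s2 := hsum (g := G) IsSOS.zero hGm hG0 hG1
  have s3 := hsum (g := fun _ => 1) IsSOS.zero measurable_const (by simp) (by simp)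
  have s4 := hsum (g := G) hq hGm hG0 hG1
  simp only [mul_one, neg_zero, exp_zero, one_mul, zero_add] at s1 s2 s3 s4
  unfold CorrIneq
  rw [s1, s2, s3, s4]
  have hc' : ∀ S : Finset κ, 0 ≤ ∏ k ∈ S, c k := fun S => Finset.prod_nonneg fun k _ => hc k
  -- the functions `S ↦ ∏_S c * E[e^{-∑_S p} …]`, with `…` among `e^{-q}`, `G`, `1`, `e^{-q} G`
  refine four_functions_theorem_univ _ _ _ _
    (fun S => mul_nonneg (hc' S) (integral_nonneg fun ω => exp_nonneg _))
    (fun S => mul_nonneg (hc' S) (integral_nonneg fun ω => mul_nonneg (exp_nonneg _) (hG0 ω)))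
    (fun S => mul_nonneg (hc' S) (integral_nonneg fun ω => exp_nonneg _))
    (fun S => mul_nonneg (hc' S) (integral_nonneg fun ω => mul_nonneg (exp_nonneg _) (hG0 ω)))
    fun S S' => ?_
  have key := gaussian_correlation_path hP X (hpS (S ∩ S')) (hq.add (hpS (S \ S')))
    (hpS (S' \ S)) s hh h1
  have e1 : ∀ x, ∑ k ∈ S ∩ S', p k x + ∑ k ∈ S \ S', p k x = ∑ k ∈ S, p k x := fun x => by
    exact Finset.sum_inter_add_sum_sdiff _ _ _
  have e2 : ∀ x, ∑ k ∈ S ∩ S', p k x + ∑ k ∈ S' \ S, p k x = ∑ k ∈ S', p k x := fun x => by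
    rw [Finset.inter_comm]; exact Finset.sum_inter_add_sum_sdiff _ _ _
  have e3 : ∀ x, ∑ k ∈ S, p k x + ∑ k ∈ S' \ S, p k x = ∑ k ∈ S ∪ S', p k x := fun x => by
    rw [← Finset.sum_union Finset.disjoint_sdiff, Finset.union_sdiff_self_eq_union]
  have hprod : (∏ k ∈ S, c k) * ∏ k ∈ S', c k = (∏ k ∈ S ∩ S', c k) * ∏ k ∈ S ∪ S', c k := by
    rw [mul_comm (∏ k ∈ S ∩ S', c k), Finset.prod_union_inter]
  simp only [Finset.inf_eq_inter, Finset.sup_eq_union]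
  have k1 : ∀ ω, rexp (-(∑ k ∈ S ∩ S', p k (X ω) + (q (X ω) + ∑ k ∈ S \ S', p k (X ω))))
      = rexp (-(q (X ω) + ∑ k ∈ S, p k (X ω))) := fun ω => by rw [← e1]; ring_nf
  simp only [k1, ← mul_assoc, ← exp_add] at key
  have k2 : ∀ ω, -∑ k ∈ S ∩ S', p k (X ω) + -∑ k ∈ S' \ S, p k (X ω) = -∑ k ∈ S', p k (X ω) :=
    fun ω => by rw [← e2]; ring
  have k3 : ∀ ω, -(q (X ω) + ∑ k ∈ S, p k (X ω)) + -∑ k ∈ S' \ S, p k (X ω)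
      = -(q (X ω) + ∑ k ∈ S ∪ S', p k (X ω)) := fun ω => by rw [← e3]; ring
  simp only [k2, k3] at key
  have key' := mul_le_mul_of_nonneg_left key (mul_nonneg (hc' (S ∩ S')) (hc' (S ∪ S')))
  rw [mul_mul_mul_comm, hprod]
  exact key'.trans_eq (mul_mul_mul_comm _ _ _ _)

end Grid

/-! ### From products to powers -/

lemma choose_succ_mul (β : ℝ) (k : ℕ) :
    Ring.choose β (k + 1) * (k + 1) = Ring.choose β k * (β - k) := by
  rw [Ring.choose_eq_smul, Ring.choose_eq_smul, descPochhammer_succ_right, Polynomial.smeval_mul,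
    Polynomial.smeval_sub, Polynomial.smeval_X, Polynomial.smeval_natCast, Nat.factorial_succ]
  simp
  field_simp

/-- All Taylor coefficients of `x ↦ 1 - (1 - x)^β` are nonnegative for `0 < β ≤ 1`. -/
lemma exists_hasSum_one_sub_rpow {β : ℝ} (h0 : 0 < β) (h1 : β ≤ 1) :
    ∃ b : ℕ → ℝ, (∀ k, 0 ≤ b k) ∧
      ∀ x : ℝ, 0 ≤ x → x < 1 → HasSum (fun k => b k * x ^ k) (1 - (1 - x) ^ β) := by
  have hpos : ∀ k : ℕ, 0 ≤ (-1) ^ k * Ring.choose β (k + 1) := fun k => by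
    induction k with
    | zero => simp [h0.le]
    | succ k ih =>
      have h := choose_succ_mul β (k + 1)
      push_cast at h
      have h2 : (-1) ^ (k + 1) * Ring.choose β (k + 1 + 1) * ((k:ℝ) + 1 + 1)
          = (-1) ^ k * Ring.choose β (k + 1) * ((k:ℝ) + 1 - β) := by
        rw [mul_assoc, h]; ring
      have h3 : 0 ≤ (-1) ^ k * Ring.choose β (k + 1) * ((k:ℝ) + 1 - β) :=
        mul_nonneg ih (by have : (0:ℝ) ≤ k := k.cast_nonneg; linarith)
      rw [← h2] at h3
      exact nonneg_of_mul_nonneg_left h3 (by positivity)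
  refine ⟨fun k => if k = 0 then 0 else (-1) ^ (k + 1) * Ring.choose β k, fun k => ?_,
    fun x hx0 hx1 => ?_⟩
  · rcases k with _ | k
    · simp
    · simpa [pow_succ] using hpos k
  · have h := (one_add_rpow_hasFPowerSeriesOnBall_zero (a := β)).hasSum (y := -x)
      (by simp [edist_dist, abs_of_nonneg hx0, hx1])
    simp only [binomialSeries, FormalMultilinearSeries.ofScalars_apply_eq, smul_eq_mul,
      zero_add] at h
    have e : (fun k : ℕ => (if k = 0 then 0 else (-1) ^ (k + 1) * Ring.choose β k) * x ^ k)
        = fun k => (if k = 0 then (1:ℝ) else 0) - Ring.choose β k * (-x) ^ k := by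
      funext k
      rcases k with _ | k
      · simp
      · simp [neg_pow x, pow_succ]; ring
    rw [e]
    simpa [sub_eq_add_neg] using (hasSum_ite_eq (0:ℕ) (1:ℝ)).sub h

section Grid

variable {d : ℕ} {P : Measure (PathSpace d)} [IsProbabilityMeasure P]
  (hP : ∀ L : PathSpace d →L[ℝ] ℝ, ∃ v : NNReal, P.map L = gaussianReal 0 v)
  {ι : Type*} [Fintype ι] (X : PathSpace d →L[ℝ] EuclideanSpace ℝ ι)
  {q : EuclideanSpace ℝ ι → ℝ} (hq : IsSOS q)
  {J : Type*} (s : Finset J) {h : J → EuclideanSpace ℝ ι → ℝ}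
  (hh : ∀ i ∈ s, IsEvenQuasiConcave (h i)) (h1 : ∀ i ∈ s, ∀ x, h i x ≤ 1)
  {κ : Type*} [Fintype κ] {p : κ → EuclideanSpace ℝ ι → ℝ} (hp : ∀ k, IsSOS (p k))
  {c : κ → ℝ} (hc : ∀ k, 0 ≤ c k)
include hP hq hh h1 hp hc

omit [Fintype κ] hP hp hc in
/-- `CorrIneq` passes to bounded pointwise limits of `F`, for a fixed finite-dimensional `q` and `G`. -/
lemma corrIneq_of_tendsto_left {F : PathSpace d → ℝ} {Fn : ℕ → PathSpace d → ℝ} {C : ℝ}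
    (hFm : ∀ n, Measurable (Fn n)) (hF0 : ∀ n ω, 0 ≤ Fn n ω) (hFC : ∀ n ω, Fn n ω ≤ C)
    (hF : ∀ ω, Tendsto (fun n => Fn n ω) atTop (𝓝 (F ω)))
    (H : ∀ n, CorrIneq P (fun ω => q (X ω)) (Fn n) (fun ω => ∏ i ∈ s, h i (X ω))) :
    CorrIneq P (fun ω => q (X ω)) F (fun ω => ∏ i ∈ s, h i (X ω)) := by
  have hXm : Measurable X := X.continuous.measurable
  exact CorrIneq.of_tendsto (hq.measurable'.comp hXm) (fun ω => hq.nonneg _) hFm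
    (fun _ => Finset.measurable_fun_prod _ fun i hi => (hh i hi).meas.comp hXm) hF0
    (fun _ ω => Finset.prod_nonneg fun i hi => (hh i hi).nonneg _) hFC
    (fun _ ω => Finset.prod_le_one (fun i hi => (hh i hi).nonneg _) fun i hi => h1 i hi _) hF
    (fun _ => tendsto_const_nhds) H

/-- The case `F = exp (∑ c_k e^{-p_k})`, the limit of `∏ (1 + c_k e^{-p_k} / n) ^ n`. -/
lemma corrIneq_exp : CorrIneq P (fun ω => q (X ω)) (fun ω => rexp (∑ k, c k * rexp (-p k (X ω))))
      (fun ω => ∏ i ∈ s, h i (X ω)) := by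
  have hXm : Measurable X := X.continuous.measurable
  have hpm := fun k => (hp k).measurable'
  have hx : ∀ k ω, 0 ≤ c k * rexp (-p k (X ω)) := fun k ω => mul_nonneg (hc k) (exp_nonneg _)
  have hle : ∀ k ω, c k * rexp (-p k (X ω)) ≤ c k := fun k ω =>
    mul_le_of_le_one_right (hc k) (exp_le_one_iff.2 (by linarith [(hp k).nonneg (X ω)]))
  refine corrIneq_of_tendsto_left X hq s hh h1
    (Fn := fun n ω => ∏ k, (1 + c k * rexp (-p k (X ω)) / (n + 1 : ℕ)) ^ (n + 1))
    (C := rexp (∑ k, c k)) (fun n => by fun_prop)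
    (fun n ω => Finset.prod_nonneg fun k _ => by have := hx k ω; positivity) (fun n ω => ?_)
    (fun ω => ?_) fun n => ?_
  · rw [exp_sum]
    refine Finset.prod_le_prod (fun k _ => by have := hx k ω; positivity) fun k _ => ?_
    calc _ ≤ (rexp (c k * rexp (-p k (X ω)) / (n + 1 : ℕ))) ^ (n + 1) := by
          have := hx k ω
          gcongr
          linarith [add_one_le_exp (c k * rexp (-p k (X ω)) / (n + 1 : ℕ))]
      _ = rexp (c k * rexp (-p k (X ω))) := by rw [← exp_nat_mul]; congr 1; field_simp
      _ ≤ _ := exp_le_exp.2 (hle k ω)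
  · simp only [exp_sum]
    exact tendsto_finsetProd _ fun k _ => (tendsto_add_atTop_iff_nat 1).2
      (tendsto_one_add_div_pow_exp (c k * rexp (-p k (X ω))))
  · have := corrIneq_prod hP X hq s hh h1 (κ := κ × Fin (n + 1)) (p := fun k => p k.1)
      (fun k => hp k.1) (c := fun k => c k.1 / (n + 1 : ℕ)) (fun k => div_nonneg (hc _) (by positivity))
    simpa only [Fintype.prod_prod_type, Finset.prod_const, Finset.card_univ, Fintype.card_fin,
      div_mul_eq_mul_div] using this

/-- The case `F = exp (-∑ c_k (1 - e^{-(δ + p_k)}) ^ β)`: up to a constant factor, the exponent is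
a power series in `e^{-(δ + p_k)}` with nonnegative coefficients. The shift `δ > 0` keeps the argument
of the series strictly below `1`. -/
lemma corrIneq_one_sub_exp_rpow {β δ : ℝ} (hβ0 : 0 < β) (hβ1 : β ≤ 1) (hδ : 0 < δ) :
    CorrIneq P (fun ω => q (X ω))
      (fun ω => rexp (-∑ k, c k * (1 - rexp (-(δ + p k (X ω)))) ^ β))
      (fun ω => ∏ i ∈ s, h i (X ω)) := by
  have hXm : Measurable X := X.continuous.measurable
  have hpm := fun k => (hp k).measurable'
  obtain ⟨b, hb0, hb⟩ := exists_hasSum_one_sub_rpow hβ0 hβ1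
  have hx1 : ∀ k ω, rexp (-(δ + p k (X ω))) < 1 := fun k ω =>
    exp_lt_one_iff.2 (by linarith [(hp k).nonneg (X ω)])
  have hS := fun k ω => hb _ (exp_nonneg _) (hx1 k ω)
  refine CorrIneq.scale (exp_pos (∑ k, c k))
    (F' := fun ω => rexp (∑ k, c k * (1 - (1 - rexp (-(δ + p k (X ω)))) ^ β))) ?_ fun ω => by
      rw [← exp_add]; simp only [mul_sub, mul_one, Finset.sum_sub_distrib]; rfl
  refine corrIneq_of_tendsto_left X hq s hh h1
    (Fn := fun n ω => rexp (∑ k, c k * ∑ j ∈ Finset.range n, b j * rexp (-(δ + p k (X ω))) ^ j))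
    (C := rexp (∑ k, c k)) (fun n => by fun_prop) (fun n ω => exp_nonneg _) (fun n ω => ?_)
    (fun ω => ?_) fun n => ?_
  · refine exp_le_exp.2 (Finset.sum_le_sum fun k _ => mul_le_of_le_one_right (hc k) ?_)
    refine (sum_le_hasSum _ (fun j _ => mul_nonneg (hb0 j) (by positivity)) (hS k ω)).trans ?_
    linarith [rpow_nonneg (sub_nonneg.2 (hx1 k ω).le) β]
  · exact (continuous_exp.tendsto _).comp
      (tendsto_finsetSum _ fun k _ => (hS k ω).tendsto_sum_nat.const_mul _)
  · have := corrIneq_exp hP X hq s hh h1 (κ := κ × Fin n) (p := fun k x => (k.2 : ℕ) * p k.1 x)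
      (fun k => (hp k.1).const_mul (Nat.cast_nonneg _))
      (c := fun k => c k.1 * (b k.2 * rexp (-δ) ^ (k.2 : ℕ)))
      (fun k => mul_nonneg (hc _) (mul_nonneg (hb0 _) (by positivity)))
    convert this using 3 with ω
    rw [Fintype.sum_prod_type]
    refine Finset.sum_congr rfl fun k _ => ?_
    rw [Finset.mul_sum, ← Fin.sum_univ_eq_sum_range
      (fun j => c k * (b j * rexp (-(δ + p k (X ω))) ^ j))]
    refine Finset.sum_congr rfl fun j _ => ?_
    rw [neg_add, exp_add, mul_pow, ← mul_neg, exp_nat_mul]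
    ring

/-- The case `F = exp (-∑ c_k p_k ^ β)`, the limit as `ε → 0` of the previous one with `p` replaced
by `ε p`, `δ = ε²` and `c` by `c / ε ^ β`. -/
lemma corrIneq_rpow {β : ℝ} (hβ0 : 0 < β) (hβ1 : β ≤ 1) :
    CorrIneq P (fun ω => q (X ω)) (fun ω => rexp (-∑ k, c k * p k (X ω) ^ β))
      (fun ω => ∏ i ∈ s, h i (X ω)) := by
  have hXm : Measurable X := X.continuous.measurable
  have hpm := fun k => (hp k).measurable'
  set ε : ℕ → ℝ := fun n => 1 / ((n:ℝ) + 1)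
  have hε : ∀ n, 0 < ε n := fun n => Nat.one_div_pos_of_nat
  have hεt : Tendsto ε atTop (𝓝 0) := tendsto_one_div_add_atTop_nhds_zero_nat
  have hp0 := fun k ω => (hp k).nonneg (X ω)
  have hy : ∀ n k ω, 0 ≤ ε n ^ 2 + ε n * p k (X ω) := fun n k ω => by
    have := hε n; have := hp0 k ω; positivity
  have hnn : ∀ n k ω, 0 ≤ 1 - rexp (-(ε n ^ 2 + ε n * p k (X ω))) := fun n k ω =>
    sub_nonneg.2 (exp_le_one_iff.2 (by linarith [hy n k ω]))
  refine corrIneq_of_tendsto_left X hq s hh h1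
    (Fn := fun n ω => rexp (-∑ k, (c k * (ε n)⁻¹ ^ β) *
      (1 - rexp (-(ε n ^ 2 + ε n * p k (X ω)))) ^ β))
    (C := 1) (fun n => by fun_prop) (fun n ω => exp_nonneg _) (fun n ω => ?_)
    (fun ω => ?_) fun n => ?_
  · refine exp_le_one_iff.2 (neg_nonpos.2 (Finset.sum_nonneg fun k _ => ?_))
    exact mul_nonneg (mul_nonneg (hc k) (rpow_nonneg (inv_nonneg.2 (hε n).le) _))
      (rpow_nonneg (hnn n k ω) _)
  · refine (continuous_exp.tendsto _).comp (tendsto_finsetSum _ fun k _ => ?_).neg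
    simp only [mul_assoc]
    refine Tendsto.const_mul _ ?_
    have e : ∀ n, (ε n)⁻¹ ^ β * (1 - rexp (-(ε n ^ 2 + ε n * p k (X ω)))) ^ β
        = ((ε n)⁻¹ * (1 - rexp (-(ε n ^ 2 + ε n * p k (X ω))))) ^ β := fun n =>
      (mul_rpow (inv_nonneg.2 (hε n).le) (hnn n k ω)).symm
    simp only [e]
    refine Tendsto.rpow_const ?_ (Or.inr hβ0.le)
    have hup : Tendsto (fun n => ε n + p k (X ω)) atTop (𝓝 (p k (X ω))) := by
      simpa using hεt.add_const (p k (X ω))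
    have hlo : Tendsto (fun n => (ε n + p k (X ω)) / (1 + (ε n ^ 2 + ε n * p k (X ω)))) atTop
        (𝓝 (p k (X ω))) := by
      have := hup.div (((hεt.pow 2).add (hεt.mul_const (p k (X ω)))).const_add 1) (by simp)
      simpa [Pi.div_def] using this
    refine tendsto_of_tendsto_of_tendsto_of_le_of_le hlo hup (fun n => ?_) fun n => ?_
    -- `y / (1 + y) ≤ 1 - exp (-y) ≤ y` for `y ≥ 0`
    · have h2 : rexp (-(ε n ^ 2 + ε n * p k (X ω))) ≤ (1 + (ε n ^ 2 + ε n * p k (X ω)))⁻¹ := by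
        rw [exp_neg]
        exact inv_anti₀ (by linarith [hy n k ω]) (by
          linarith [add_one_le_exp (ε n ^ 2 + ε n * p k (X ω))])
      have h3 : (ε n + p k (X ω)) / (1 + (ε n ^ 2 + ε n * p k (X ω)))
          = (ε n)⁻¹ * (1 - (1 + (ε n ^ 2 + ε n * p k (X ω)))⁻¹) := by
        have h4 := hε n
        have h5 : 1 + (ε n ^ 2 + ε n * p k (X ω)) ≠ 0 := (by linarith [hy n k ω] : (0:ℝ) < _).ne'
        rw [div_eq_iff h5, mul_assoc, sub_mul, inv_mul_cancel₀ h5]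
        field_simp
        ring
      show (ε n + p k (X ω)) / (1 + (ε n ^ 2 + ε n * p k (X ω))) ≤ _
      rw [h3]
      exact mul_le_mul_of_nonneg_left (by linarith) (inv_nonneg.2 (hε n).le)
    · show (ε n)⁻¹ * _ ≤ _
      rw [inv_mul_le_iff₀ (hε n)]
      linarith [one_sub_le_exp_neg (ε n ^ 2 + ε n * p k (X ω))]
  · exact corrIneq_one_sub_exp_rpow hP X hq s hh h1
      (fun k => (hp k).const_mul (hε n).le)
      (fun k => mul_nonneg (hc k) (rpow_nonneg (inv_nonneg.2 (hε n).le) _)) hβ0 hβ1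
      (pow_pos (hε n) 2)

end Grid

/-! ### Paths at finitely many times and Riemann sums -/

/-- Evaluation of a path at the finitely many times `t i`, as a linear map. -/
def gridEval {d : ℕ} {N : Type*} [Fintype N] (t : N → ℝ) :
    PathSpace d →L[ℝ] EuclideanSpace ℝ (N × Fin d) :=
  ((EuclideanSpace.equiv (N × Fin d) ℝ).symm : (N × Fin d → ℝ) →L[ℝ] _) ∘L
    ContinuousLinearMap.pi fun k => (EuclideanSpace.proj k.2 : _ →L[ℝ] ℝ) ∘L
      ContinuousMap.evalCLM ℝ (t k.1)

/-- The `i`-th position in a tuple of positions. -/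
def gridPos (d : ℕ) {N : Type*} [Fintype N] (i : N) :
    EuclideanSpace ℝ (N × Fin d) →L[ℝ] EuclideanSpace ℝ (Fin d) :=
  ((EuclideanSpace.equiv (Fin d) ℝ).symm : (Fin d → ℝ) →L[ℝ] _) ∘L
    ContinuousLinearMap.pi fun a => (EuclideanSpace.proj (i, a) : _ →L[ℝ] ℝ)

lemma gridPos_gridEval {d : ℕ} {N : Type*} [Fintype N] (t : N → ℝ) (i : N) (ω : PathSpace d) :
    gridPos d i (gridEval t ω) = ω (t i) := by
  ext a
  simp [gridPos, gridEval]

lemma isSOS_norm_sq (d : ℕ) : IsSOS (fun z : EuclideanSpace ℝ (Fin d) => ‖z‖ ^ 2) := by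
  simp only [EuclideanSpace.real_norm_sq_eq]
  exact IsSOS.sum _ fun a _ => IsSOS.sq (EuclideanSpace.proj a : _ →L[ℝ] ℝ).toLinearMap

/-- The correlation inequality for functionals of the path at finitely many times. -/
lemma corrIneq_grid {d : ℕ} {P : Measure (PathSpace d)} [IsProbabilityMeasure P]
    (hP : ∀ L : PathSpace d →L[ℝ] ℝ, ∃ v : NNReal, P.map L = gaussianReal 0 v)
    {N κ : Type*} [Fintype N] [Fintype κ] (t : N → ℝ) (o : N) (a b : κ → N) {u : ℝ} (hu : 0 ≤ u)
    {c : κ → ℝ} (hc : ∀ k, 0 ≤ c k) {h : κ → EuclideanSpace ℝ (Fin d) → ℝ}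
    (hh : ∀ k, IsEvenQuasiConcave (h k)) (h1 : ∀ k z, h k z ≤ 1)
    {γ : ℝ} (hγ0 : 0 < γ) (hγ2 : γ ≤ 2) :
    CorrIneq P (fun ω => u * ‖ω (t o)‖ ^ 2)
      (fun ω => rexp (-∑ k, c k * ‖ω (t (a k)) - ω (t (b k))‖ ^ γ))
      (fun ω => ∏ k, h k (ω (t (a k)) - ω (t (b k)))) := by
  have hpos := fun i ω => gridPos_gridEval (d := d) t i ω
  have H := corrIneq_rpow hP (gridEval t)
    (q := fun y => u * ‖gridPos d o y‖ ^ 2)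
    (((isSOS_norm_sq d).comp (gridPos d o).toLinearMap).const_mul hu)
    Finset.univ (h := fun k y => h k ((gridPos d (a k) - gridPos d (b k)) y))
    (fun k _ => (hh k).comp (gridPos d (a k) - gridPos d (b k)).toLinearMap
      (gridPos d (a k) - gridPos d (b k)).continuous.measurable)
    (fun k _ y => h1 k _)
    (p := fun k y => ‖(gridPos d (a k) - gridPos d (b k)) y‖ ^ 2)
    (fun k => (isSOS_norm_sq d).comp (gridPos d (a k) - gridPos d (b k)).toLinearMap) hc
    (β := γ / 2) (by linarith) (by linarith)
  have e : ∀ z : EuclideanSpace ℝ (Fin d), (‖z‖ ^ 2) ^ (γ / 2) = ‖z‖ ^ γ := fun z => by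
    rw [← rpow_natCast, ← rpow_mul (norm_nonneg _)]
    congr 1; push_cast; ring
  simpa only [sub_apply, hpos, e] using H

/-- Error bound for left-endpoint Riemann sums. -/
lemma abs_riemann_sub_le {T : ℝ} (hT : 0 < T) (n : ℕ) {φ : ℝ → ℝ} (hφ : Continuous φ) {ε : ℝ}
    (h : ∀ x ∈ Set.Icc 0 T, ∀ y ∈ Set.Icc 0 T, |x - y| ≤ T / (n + 1) → |φ x - φ y| ≤ ε) :
    |(∫ x in (0:ℝ)..T, φ x) - ∑ i : Fin (n + 1), T / (n + 1) * φ (i * (T / (n + 1)))| ≤ T * ε := by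
  set δ := T / ((n:ℝ) + 1)
  have hδ : 0 < δ := by positivity
  have hδn : ((n + 1 : ℕ) : ℝ) * δ = T := by simp only [δ]; push_cast; field_simp
  rw [Fin.sum_univ_eq_sum_range (fun i : ℕ => δ * φ (i * δ))]
  have hs := intervalIntegral.sum_integral_adjacent_intervals (μ := volume) (f := φ)
    (a := fun i : ℕ => i * δ) (n := n + 1) (fun k _ => hφ.intervalIntegrable _ _)
  simp only [hδn, Nat.cast_zero, zero_mul] at hs
  rw [← hs, ← Finset.sum_sub_distrib]
  calc _ ≤ ∑ i ∈ Finset.range (n + 1), ε * δ := ?_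
    _ = T * ε := by rw [Finset.sum_const, Finset.card_range, nsmul_eq_mul, ← hδn]; ring
  refine (Finset.abs_sum_le_sum_abs _ _).trans (Finset.sum_le_sum fun i hi => ?_)
  have e : (∫ x in (i * δ)..((i + 1 : ℕ) * δ), φ x) - δ * φ (i * δ)
      = ∫ x in (i * δ)..((i + 1 : ℕ) * δ), (φ x - φ (i * δ)) := by
    rw [intervalIntegral.integral_sub (hφ.intervalIntegrable _ _) (by simp)]
    simp only [intervalIntegral.integral_const, smul_eq_mul]
    push_cast
    ring
  have hi1 : ((i + 1 : ℕ) : ℝ) * δ ≤ T := by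
    rw [← hδn]
    have : ((i + 1 : ℕ) : ℝ) ≤ (n + 1 : ℕ) := by exact_mod_cast Finset.mem_range.1 hi
    gcongr
  have hi2 : ((i + 1 : ℕ) : ℝ) * δ = i * δ + δ := by push_cast; ring
  have hi0 : 0 ≤ (i:ℝ) * δ := by positivity
  rw [e, ← Real.norm_eq_abs]
  refine (intervalIntegral.norm_integral_le_of_norm_le_const (C := ε) fun x hx => ?_).trans
    (by rw [hi2]; simp [abs_of_pos hδ])
  rw [Set.uIoc_of_le (by linarith)] at hx
  refine h x ⟨by linarith [hx.1], by linarith [hx.2]⟩ _ ⟨hi0, by linarith⟩ ?_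
  rw [abs_le]; constructor <;> linarith [hx.1, hx.2]

/-- Left-endpoint Riemann sums converge to the iterated integral, by uniform continuity. -/
lemma tendsto_riemann {T : ℝ} (hT : 0 < T) {H : ℝ → ℝ → ℝ} (hH : Continuous (Function.uncurry H)) :
    Tendsto (fun n : ℕ => ∑ k : Fin (n + 1) × Fin (n + 1), (T / (n + 1)) ^ 2 *
      H (k.1 * (T / (n + 1))) (k.2 * (T / (n + 1)))) atTop
      (𝓝 (∫ t in Set.Icc 0 T, ∫ s in Set.Icc 0 T, H t s)) := by
  simp only [integral_Icc_eq_integral_Ioc, ← intervalIntegral.integral_of_le hT.le]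
  have hu := (isCompact_Icc.prod isCompact_Icc :
    IsCompact (Set.Icc (0:ℝ) T ×ˢ Set.Icc (0:ℝ) T)).uniformContinuousOn_of_continuous
      hH.continuousOn
  rw [Metric.uniformContinuousOn_iff_le] at hu
  rw [Metric.tendsto_atTop]
  intro ε hε
  obtain ⟨δ, hδ, hu⟩ := hu (ε / (4 * T ^ 2)) (by positivity)
  obtain ⟨M, hM⟩ := exists_nat_gt (T / δ)
  refine ⟨M, fun n hn => ?_⟩
  have hn : T / ((n:ℝ) + 1) ≤ δ := by
    rw [div_le_iff₀ (by positivity), ← div_le_iff₀' hδ]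
    have : (M:ℝ) ≤ n := by exact_mod_cast hn
    linarith
  set r := T / ((n:ℝ) + 1)
  have hr : 0 < r := by positivity
  have hrn : ((n + 1 : ℕ) : ℝ) * r = T := by simp only [r]; push_cast; field_simp
  set η := ε / (4 * T ^ 2)
  have hη : 0 < η := by positivity
  have h1 : ∀ t ∈ Set.Icc 0 T, ∀ x ∈ Set.Icc 0 T, ∀ y ∈ Set.Icc 0 T, |x - y| ≤ r →
      |H t x - H t y| ≤ η := fun t ht x hx y hy hxy =>
    hu (t, x) ⟨ht, hx⟩ (t, y) ⟨ht, hy⟩ (by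
      simpa [Prod.dist_eq, Real.dist_eq, hδ.le] using hxy.trans hn)
  have h2 : ∀ s ∈ Set.Icc 0 T, ∀ x ∈ Set.Icc 0 T, ∀ y ∈ Set.Icc 0 T, |x - y| ≤ r →
      |H x s - H y s| ≤ η := fun t ht x hx y hy hxy =>
    hu (x, t) ⟨hx, ht⟩ (y, t) ⟨hy, ht⟩ (by
      simpa [Prod.dist_eq, Real.dist_eq, hδ.le] using hxy.trans hn)
  have hc1 : ∀ t, Continuous (H t) := fun t => by
    exact hH.comp (by fun_prop : Continuous fun s : ℝ => (t, s))
  have hc2 : Continuous fun t => ∫ s in (0:ℝ)..T, H t s :=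
    intervalIntegral.continuous_parametric_intervalIntegral_of_continuous' hH _ _
  have A := abs_riemann_sub_le hT n hc2 (ε := T * η) fun x hx y hy hxy => by
    rw [← intervalIntegral.integral_sub ((hc1 x).intervalIntegrable _ _)
      ((hc1 y).intervalIntegrable _ _), ← Real.norm_eq_abs]
    refine (intervalIntegral.norm_integral_le_of_norm_le_const (C := η) fun s hs => ?_).trans
      (by rw [sub_zero, abs_of_pos hT, mul_comm])
    rw [Set.uIoc_of_le hT.le] at hs
    exact h2 s ⟨hs.1.le, hs.2⟩ x hx y hy hxy
  have B : |∑ i : Fin (n + 1), r * (∫ s in (0:ℝ)..T, H (i * r) s)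
      - ∑ i : Fin (n + 1), r * ∑ j : Fin (n + 1), r * H (i * r) (j * r)| ≤ T * (T * η) := by
    rw [← Finset.sum_sub_distrib]
    calc _ ≤ ∑ i : Fin (n + 1), r * (T * η) := ?_
      _ = T * (T * η) := by rw [← hrn]; simp; ring
    refine (Finset.abs_sum_le_sum_abs _ _).trans (Finset.sum_le_sum fun i _ => ?_)
    rw [← mul_sub, abs_mul, abs_of_pos hr]
    refine mul_le_mul_of_nonneg_left (abs_riemann_sub_le hT n (hc1 _) (h1 _ ?_)) hr.le
    refine ⟨by positivity, ?_⟩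
    rw [← hrn]
    have : (i:ℝ) ≤ (n + 1 : ℕ) := by exact_mod_cast i.2.le
    gcongr
  have e : ∑ k : Fin (n + 1) × Fin (n + 1), r ^ 2 * H (k.1 * r) (k.2 * r)
      = ∑ i : Fin (n + 1), r * ∑ j : Fin (n + 1), r * H (i * r) (j * r) := by
    rw [Fintype.sum_prod_type]
    simp only [Finset.mul_sum]
    exact Finset.sum_congr rfl fun i _ => Finset.sum_congr rfl fun j _ => by ring
  rw [e, Real.dist_eq, abs_sub_comm]
  have hη2 : T * (T * η) = ε / 4 := by simp only [η]; field_simp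
  rw [hη2] at A B
  calc _ ≤ ε / 4 + ε / 4 := (abs_sub_le _ _ _).trans (add_le_add A B)
    _ < ε := by linarith

/-! ### The energies -/

lemma measurable_eval {d : ℕ} (t : ℝ) : Measurable fun ω : PathSpace d => ω t :=
  (ContinuousMap.evalCLM ℝ t : PathSpace d →L[ℝ] _).continuous.measurable

section Energy

variable {d : ℕ} {g : EuclideanSpace ℝ (Fin d) → ℝ} {ξ T : ℝ}

lemma continuous_kernel (hg : Continuous g) (hξ : 0 ≤ ξ) (ω : PathSpace d) :
    Continuous (Function.uncurry fun t s : ℝ => g (ω t - ω s) / (1 + |t - s| ^ ξ)) := by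
  simp only [Function.uncurry_def]
  refine Continuous.div (by fun_prop) ?_ fun x => ?_
  · exact continuous_const.add (Continuous.rpow_const (by fun_prop) fun _ => Or.inr hξ)
  · have := rpow_nonneg (abs_nonneg (x.1 - x.2)) ξ
    positivity

/-- The left-endpoint Riemann sum, with `n + 1` nodes in each variable, for `pairEnergy`. -/
def energySum (g : EuclideanSpace ℝ (Fin d) → ℝ) (ξ T : ℝ) (n : ℕ) (ω : PathSpace d) : ℝ :=
  ∑ k : Fin (n + 1) × Fin (n + 1), (T / (n + 1)) ^ 2 *
    (g (ω (k.1 * (T / (n + 1))) - ω (k.2 * (T / (n + 1)))) /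
      (1 + |(k.1 * (T / (n + 1)) - k.2 * (T / (n + 1)) : ℝ)| ^ ξ))

lemma tendsto_energySum (hg : Continuous g) (hξ : 0 ≤ ξ) (hT : 0 < T) (ω : PathSpace d) :
    Tendsto (fun n => energySum g ξ T n ω) atTop (𝓝 (pairEnergy g ξ T ω)) :=
  tendsto_riemann hT (continuous_kernel hg hξ ω)

lemma measurable_energySum (hg : Continuous g) (n : ℕ) : Measurable (energySum g ξ T n) := by
  have h := measurable_eval (d := d)
  have hgm := hg.measurable
  unfold energySum
  fun_prop

lemma energySum_nonneg (hg : ∀ z, 0 ≤ g z) (n : ℕ) (ω : PathSpace d) :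
    0 ≤ energySum g ξ T n ω :=
  Finset.sum_nonneg fun _ _ => mul_nonneg (sq_nonneg _)
    (div_nonneg (hg _) (add_nonneg zero_le_one (rpow_nonneg (abs_nonneg _) _)))

lemma measurable_pairEnergy (hg : Continuous g) (hξ : 0 ≤ ξ) (hT : 0 < T) :
    Measurable (pairEnergy g ξ T) :=
  measurable_of_tendsto_metrizable (measurable_energySum hg)
    (tendsto_pi_nhds.2 fun ω => tendsto_energySum hg hξ hT ω)

lemma pairEnergy_nonneg (hg : ∀ z, 0 ≤ g z) (ω : PathSpace d) : 0 ≤ pairEnergy g ξ T ω :=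
  integral_nonneg fun _ => integral_nonneg fun _ =>
    div_nonneg (hg _) (add_nonneg zero_le_one (rpow_nonneg (abs_nonneg _) _))

/-- Linearity of the energy, read off from the Riemann sums. -/
lemma pairEnergy_eq_add {f h : EuclideanSpace ℝ (Fin d) → ℝ} {ζ : ℝ} (hh : Continuous h)
    (hg : Continuous g) (hf : ∀ z, f z = ζ * h z + g z) (hξ : 0 ≤ ξ) (hT : 0 < T)
    (ω : PathSpace d) : pairEnergy f ξ T ω = ζ * pairEnergy h ξ T ω + pairEnergy g ξ T ω := by
  have hfc : Continuous f := by rw [funext hf]; fun_prop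
  refine tendsto_nhds_unique (tendsto_energySum hfc hξ hT ω) ?_
  refine (((tendsto_energySum hh hξ hT ω).const_mul ζ).add (tendsto_energySum hg hξ hT ω)).congr
    fun n => ?_
  simp only [energySum, Finset.mul_sum, ← Finset.sum_add_distrib]
  exact Finset.sum_congr rfl fun k _ => by rw [hf]; ring

end Energy

/-- A decreasing function of an even quasi-convex function is even and quasi-concave. -/
lemma isEvenQuasiConcave_exp {V : Type*} [AddCommGroup V] [Module ℝ V] [MeasurableSpace V]
    {g : V → ℝ} (hg : Measurable g) (he : ∀ x, g (-x) = g x)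
    (hqc : ∀ c : ℝ, Convex ℝ {z | g z ≤ c}) {c : ℝ} (hc : 0 ≤ c) :
    IsEvenQuasiConcave (fun x => rexp (-(c * g x))) where
  meas := by fun_prop
  nonneg _ := exp_nonneg _
  even x := by rw [he]
  conv t x hx y hy a b ha hb hab := by
    have h : g (a • x + b • y) ≤ max (g x) (g y) :=
      hqc _ (show g x ≤ _ from le_max_left _ _) (show g y ≤ _ from le_max_right _ _)
        ha hb hab
    have h' : rexp (-(c * max (g x) (g y))) ≤ rexp (-(c * g (a • x + b • y))) :=
      exp_le_exp.2 (neg_le_neg (mul_le_mul_of_nonneg_left h hc))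
    refine lt_of_lt_of_le ?_ h'
    rcases max_choice (g x) (g y) with e | e <;> rw [e]
    exacts [hx, hy]

/-- The correlation inequality for the energies, by discretising both double integrals. -/
lemma corrIneq_pairEnergy {d : ℕ} {P : Measure (PathSpace d)} [IsProbabilityMeasure P]
    (hP : ∀ L : PathSpace d →L[ℝ] ℝ, ∃ v : NNReal, P.map L = gaussianReal 0 v)
    {γ : ℝ} (hγ0 : 0 < γ) (hγ2 : γ ≤ 2) {g : EuclideanSpace ℝ (Fin d) → ℝ} (hg : Continuous g)
    (hg0 : ∀ z, 0 ≤ g z) (he : ∀ x, g (-x) = g x) (hqc : ∀ c : ℝ, Convex ℝ {z | g z ≤ c})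
    {ξ T : ℝ} (hξ : 0 ≤ ξ) (hT : 0 < T) {a b u : ℝ} (ha : 0 ≤ a) (hb : 0 ≤ b) (hu : 0 ≤ u) :
    CorrIneq P (fun ω => u * ‖ω T‖ ^ 2)
      (fun ω => rexp (-(a * pairEnergy (fun z => ‖z‖ ^ γ) ξ T ω)))
      (fun ω => rexp (-(b * pairEnergy g ξ T ω))) := by
  have hn : Continuous fun z : EuclideanSpace ℝ (Fin d) => ‖z‖ ^ γ :=
    continuous_norm.rpow_const fun _ => Or.inr hγ0.le
  have hn0 : ∀ z : EuclideanSpace ℝ (Fin d), 0 ≤ ‖z‖ ^ γ := fun z => rpow_nonneg (norm_nonneg _) _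
  have hm := measurable_eval (d := d) T
  refine CorrIneq.of_tendsto
    (Fn := fun n ω => rexp (-(a * energySum (fun z => ‖z‖ ^ γ) ξ T n ω)))
    (Gn := fun n ω => rexp (-(b * energySum g ξ T n ω))) (C := 1)
    ((hm.norm.pow_const 2).const_mul u) (fun ω => by positivity)
    (fun n => by have := measurable_energySum (ξ := ξ) (T := T) hn n; fun_prop)
    (fun n => by have := measurable_energySum (ξ := ξ) (T := T) hg n; fun_prop)
    (fun _ _ => exp_nonneg _) (fun _ _ => exp_nonneg _)
    (fun n ω => exp_le_one_iff.2 (neg_nonpos.2 (mul_nonneg ha (energySum_nonneg hn0 n ω))))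
    (fun n ω => exp_le_one_iff.2 (neg_nonpos.2 (mul_nonneg hb (energySum_nonneg hg0 n ω))))
    (fun ω => (continuous_exp.tendsto _).comp ((tendsto_energySum hn hξ hT ω).const_mul a).neg)
    (fun ω => (continuous_exp.tendsto _).comp ((tendsto_energySum hg hξ hT ω).const_mul b).neg)
    fun n => ?_
  -- the nodes of the Riemann sum, together with the extra time `T`
  set r := T / ((n:ℝ) + 1)
  set w : Fin (n + 1) × Fin (n + 1) → ℝ := fun k => r ^ 2 / (1 + |k.1 * r - k.2 * r| ^ ξ)
  have hw : ∀ k, 0 ≤ w k := fun k => div_nonneg (sq_nonneg _)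
    (add_nonneg zero_le_one (rpow_nonneg (abs_nonneg _) _))
  have H := corrIneq_grid hP (N := Option (Fin (n + 1)))
    (t := fun i => i.elim T fun j => j * r) (o := none)
    (a := fun k : Fin (n + 1) × Fin (n + 1) => some k.1) (b := fun k => some k.2) hu
    (c := fun k => a * w k) (fun k => mul_nonneg ha (hw k))
    (h := fun k z => rexp (-(b * w k * g z)))
    (fun k => isEvenQuasiConcave_exp hg.measurable he hqc (mul_nonneg hb (hw k)))
    (fun k z => exp_le_one_iff.2 (neg_nonpos.2 (mul_nonneg (mul_nonneg hb (hw k)) (hg0 z))))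
    hγ0 hγ2
  have e : ∀ (c : ℝ) (h : EuclideanSpace ℝ (Fin d) → ℝ) (ω : PathSpace d),
      c * energySum h ξ T n ω = ∑ k : Fin (n + 1) × Fin (n + 1),
        c * w k * h (ω (k.1 * r) - ω (k.2 * r)) := fun c h ω => by
    rw [energySum, Finset.mul_sum]
    refine Finset.sum_congr rfl fun k _ => ?_
    simp only [w, r]; ring
  simp only [e]
  simpa only [← exp_sum, Finset.sum_neg_distrib, Option.elim_some, Option.elim_none] using H

/-- The derivative of `CorrIneq` at `u = 0` with `q = u * Y`: the inequality for `1 - e^{-u Y}` is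
divided by `u`, and `(1 - e^{-u Y}) / u` is dominated by `Y`. -/
lemma CorrIneq.moment {Ω : Type*} [MeasurableSpace Ω] {P : Measure Ω} [IsProbabilityMeasure P]
    {Y F G : Ω → ℝ} (hY : Measurable Y) (hYi : Integrable Y P) (hY0 : ∀ ω, 0 ≤ Y ω)
    (hF : Measurable F) (hG : Measurable G) (hF0 : ∀ ω, 0 ≤ F ω) (hG0 : ∀ ω, 0 ≤ G ω)
    (hF1 : ∀ ω, F ω ≤ 1) (hG1 : ∀ ω, G ω ≤ 1)
    (h : ∀ u : ℝ, 0 < u → CorrIneq P (fun ω => u * Y ω) F G) :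
    (∫ ω, F ω ∂P) * ∫ ω, Y ω * (F ω * G ω) ∂P ≤ (∫ ω, Y ω * F ω ∂P) * ∫ ω, F ω * G ω ∂P := by
  set u : ℕ → ℝ := fun n => 1 / ((n:ℝ) + 1)
  have hu : ∀ n, 0 < u n := fun n => Nat.one_div_pos_of_nat
  have hut : Tendsto u atTop (𝓝[≠] 0) :=
    tendsto_nhdsWithin_iff.2 ⟨tendsto_one_div_add_atTop_nhds_zero_nat,
      .of_forall fun n => (hu n).ne'⟩
  have hq : ∀ n ω, rexp (-(u n * Y ω)) ≤ 1 := fun n ω =>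
    exp_le_one_iff.2 (neg_nonpos.2 (mul_nonneg (hu n).le (hY0 ω)))
  have hlim : ∀ y : ℝ, Tendsto (fun n => (u n)⁻¹ * (1 - rexp (-(u n * y)))) atTop (𝓝 y) := fun y => by
    have h1 : HasDerivAt (fun v : ℝ => 1 - rexp (-(v * y))) y 0 := by
      have := (((hasDerivAt_id (0:ℝ)).mul_const y).neg.exp).const_sub 1
      simpa using this
    have := h1.tendsto_slope.comp hut
    simpa [slope_def_field, Function.comp_def, div_eq_inv_mul] using this
  have key : ∀ {K : Ω → ℝ}, Measurable K → (∀ ω, 0 ≤ K ω) → (∀ ω, K ω ≤ 1) →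
      Tendsto (fun n => ∫ ω, (u n)⁻¹ * (1 - rexp (-(u n * Y ω))) * K ω ∂P) atTop
        (𝓝 (∫ ω, Y ω * K ω ∂P)) := fun {K} hK hK0 hK1 => by
    refine tendsto_integral_of_dominated_convergence Y (fun n => ?_) hYi
      (fun n => .of_forall fun ω => ?_) (.of_forall fun ω => (hlim _).mul_const _)
    · exact Measurable.aestronglyMeasurable (by fun_prop)
    · have h0 : 0 ≤ (u n)⁻¹ * (1 - rexp (-(u n * Y ω))) :=
        mul_nonneg (inv_nonneg.2 (hu n).le) (sub_nonneg.2 (hq n ω))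
      rw [norm_of_nonneg (mul_nonneg h0 (hK0 ω))]
      refine (mul_le_of_le_one_right h0 (hK1 ω)).trans ?_
      rw [inv_mul_le_iff₀ (hu n)]
      linarith [one_sub_le_exp_neg (u n * Y ω)]
  have hint : ∀ {K : Ω → ℝ}, Measurable K → (∀ ω, 0 ≤ K ω) → (∀ ω, K ω ≤ 1) → ∀ n,
      ∫ ω, (u n)⁻¹ * (1 - rexp (-(u n * Y ω))) * K ω ∂P
        = (u n)⁻¹ * ((∫ ω, K ω ∂P) - ∫ ω, rexp (-(u n * Y ω)) * K ω ∂P) :=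
    fun {K} hK hK0 hK1 n => by
    rw [← integral_sub, ← integral_const_mul]
    · exact integral_congr_ae (.of_forall fun ω => by ring)
    · exact Integrable.of_bound hK.aestronglyMeasurable 1
        (.of_forall fun ω => by rw [norm_of_nonneg (hK0 ω)]; exact hK1 ω)
    · exact Integrable.of_bound (Measurable.aestronglyMeasurable (by fun_prop)) 1
        (.of_forall fun ω => by
          rw [norm_of_nonneg (mul_nonneg (exp_nonneg _) (hK0 ω))]
          exact mul_le_one₀ (hq n ω) (hK0 ω) (hK1 ω))
  have hFG := hF.mul hG
  have hFG0 := fun ω => mul_nonneg (hF0 ω) (hG0 ω)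
  have hFG1 := fun ω => mul_le_one₀ (hF1 ω) (hG0 ω) (hG1 ω)
  refine le_of_tendsto_of_tendsto' ((key hFG hFG0 hFG1).const_mul _)
    ((key hF hF0 hF1).mul_const _) fun n => ?_
  rw [hint hF hF0 hF1, hint hFG hFG0 hFG1, mul_left_comm, mul_assoc]
  refine mul_le_mul_of_nonneg_left ?_ (inv_nonneg.2 (hu n).le)
  have := h (u n) (hu n)
  unfold CorrIneq at this
  simp only [Pi.mul_apply]
  linarith

lemma integrable_norm_sq {d : ℕ} {P : Measure (PathSpace d)}
    (hP : ∀ L : PathSpace d →L[ℝ] ℝ, ∃ v : NNReal, P.map L = gaussianReal 0 v) (T : ℝ) :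
    Integrable (fun ω => ‖ω T‖ ^ 2) P := by
  simp only [EuclideanSpace.real_norm_sq_eq]
  refine integrable_finsetSum _ fun a _ => ?_
  let L : PathSpace d →L[ℝ] ℝ := (EuclideanSpace.proj a : _ →L[ℝ] ℝ) ∘L ContinuousMap.evalCLM ℝ T
  obtain ⟨v, hv⟩ := hP L
  have h : MemLp id 2 (P.map L) := by rw [hv]; exact memLp_id_gaussianReal 2
  exact ((memLp_map_measure_iff (by fun_prop) L.continuous.measurable.aemeasurable).1 h).integrable_sq

end

/-! ### The comparison -/

/-- FKG-GCI comparison: replacing `f` by `|z|^γ` with coupling `ζα`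
only increases the variance. -/
theorem statement13 (d : ℕ) (hd : 1 ≤ d) (γ : ℝ) (hγ0 : 0 < γ) (hγ2 : γ < 2)
    (α : ℝ) (hα : 0 < α) (ξ : ℝ) (hξ : 0 ≤ ξ) (T : ℝ) (hT : 0 < T)
    (f : EuclideanSpace ℝ (Fin d) → ℝ)
    (hfc : Continuous f) (hf0 : ∀ z, 0 ≤ f z)
    (hfrad : ∀ z w : EuclideanSpace ℝ (Fin d), ‖z‖ = ‖w‖ → f z = f w)
    (ζ : ℝ) (hζ : 0 < ζ)
    (hqc : ∀ c : ℝ, Convex ℝ {z : EuclideanSpace ℝ (Fin d) | f z - ζ * ‖z‖ ^ γ ≤ c})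
    (P : Measure (PathSpace d)) (hP : IsWienerMeasure T P) :
    (∫ ω, ‖ω T‖ ^ 2 ∂(tiltedPath P f α ξ T))
      ≤ ∫ ω, ‖ω T‖ ^ 2 ∂(tiltedPath P (fun z => ‖z‖ ^ γ) (ζ * α) ξ T) := by
  obtain ⟨hprob, hP, -⟩ := hP
  set g : EuclideanSpace ℝ (Fin d) → ℝ := fun z => f z - ζ * ‖z‖ ^ γ with hgdef
  set η : EuclideanSpace ℝ (Fin d) → ℝ := fun z => ‖z‖ ^ γ
  have hη : Continuous η := continuous_norm.rpow_const fun _ => Or.inr hγ0.le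
  have hη0 : ∀ z, 0 ≤ η z := fun z => rpow_nonneg (norm_nonneg _) _
  have hg : Continuous g := hfc.sub (continuous_const.mul hη)
  have hge : ∀ z, g (-z) = g z := fun z => by
    simp only [hgdef, norm_neg, hfrad (-z) z (norm_neg z)]
  -- an even quasi-convex function is minimal at the origin
  have hg0 : ∀ z, 0 ≤ g z := fun z => by
    have h : g ((1 / 2 : ℝ) • z + (1 / 2 : ℝ) • -z) ≤ g z :=
      hqc (g z) (show g z ≤ g z from le_rfl) (show g (-z) ≤ g z from (hge z).le)
        (by norm_num) (by norm_num) (by norm_num)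
    have h0 : g 0 ≤ g z := by simpa using h
    have h1 : g 0 = f 0 := by simp [hgdef, zero_rpow hγ0.ne']
    linarith [hf0 0]
  set F : PathSpace d → ℝ := fun ω => rexp (-(ζ * α * pairEnergy η ξ T ω)) with hFdef
  set G : PathSpace d → ℝ := fun ω => rexp (-(α * pairEnergy g ξ T ω)) with hGdef
  have hFm : Measurable F := by
    have := measurable_pairEnergy (T := T) hη hξ hT; fun_prop
  have hGm : Measurable G := by
    have := measurable_pairEnergy (T := T) hg hξ hT; fun_prop
  have hF1 : ∀ ω, F ω ≤ 1 := fun ω => exp_le_one_iff.2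
    (neg_nonpos.2 (mul_nonneg (by positivity) (pairEnergy_nonneg hη0 ω)))
  have hG1 : ∀ ω, G ω ≤ 1 := fun ω => exp_le_one_iff.2
    (neg_nonpos.2 (mul_nonneg hα.le (pairEnergy_nonneg hg0 ω)))
  have hm := measurable_eval (d := d) T
  have H := CorrIneq.moment (P := P) (Y := fun ω => ‖ω T‖ ^ 2) (hm.norm.pow_const 2)
    (integrable_norm_sq hP T) (fun ω => by positivity) hFm hGm (fun _ => exp_nonneg _)
    (fun _ => exp_nonneg _) hF1 hG1
    fun u hu => corrIneq_pairEnergy hP hγ0 hγ2.le hg hg0 hge hqc hξ hT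
      (mul_pos hζ hα).le hα.le hu.le
  have hFG1 : ∀ ω, F ω * G ω ≤ 1 := fun ω => mul_le_one₀ (hF1 ω) (exp_nonneg _) (hG1 ω)
  have hFi : Integrable F P := Integrable.of_bound hFm.aestronglyMeasurable 1
    (.of_forall fun ω => by rw [norm_of_nonneg (exp_nonneg _)]; exact hF1 ω)
  have hFGi : Integrable (fun ω => F ω * G ω) P :=
    Integrable.of_bound (hFm.mul hGm).aestronglyMeasurable 1
      (.of_forall fun ω => by
        rw [norm_of_nonneg (mul_nonneg (exp_nonneg _) (exp_nonneg _))]; exact hFG1 ω)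
  have eFG : ∀ ω, F ω * G ω = rexp (-α * pairEnergy f ξ T ω) := fun ω => by
    rw [pairEnergy_eq_add (f := f) (ζ := ζ) hη hg (fun z => by simp [hgdef, η]) hξ hT, hFdef,
      hGdef, ← exp_add]
    congr 1; ring
  have eF : ∀ ω, F ω = rexp (-(ζ * α) * pairEnergy η ξ T ω) := fun ω => by
    rw [hFdef, neg_mul]
  have hZF : 0 < ∫ ω, F ω ∂P := by
    simp only [eF]; exact integral_exp_pos (hFi.congr (.of_forall eF))
  have hZFG : 0 < ∫ ω, F ω * G ω ∂P := by
    simp only [eFG] at hFGi ⊢; exact integral_exp_pos hFGi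
  rw [tiltedPath, tiltedPath, integral_tilted, integral_tilted]
  simp only [← eFG, ← eF, smul_eq_mul, div_mul_eq_mul_div, integral_div]
  rw [div_le_div_iff₀ hZFG hZF]
  simp only [mul_comm (_ * _) (‖_‖ ^ 2), mul_comm (F _) (‖_‖ ^ 2)]
  linarith
end
end

section
/- Let γ ∈ (0,2) and ξ < 2. Define sequences (r_n) and (A_n) of positive reals by r_0 = √20, A_n = r_n^{1−γ/2} · 2^{n(ξ−2)/2}, and r_{n+1} = 256 Σ_{k=0}^{n} A_k. Then the sequence (r_n) is bounded: for every j ∈ ℕ, r_j ≤ ( 20^{γ/4} + 128 γ / (1 − 2^{(ξ−2)/2}) )^{2/γ}. -/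
/-!
Write `p = γ / 2 ∈ (0, 1)` and `q = 2 ^ ((ξ - 2) / 2) ∈ (0, 1)`. The recursion gives
`r (n + 1) ≤ r n + 256 * r n ^ (1 - p) * q ^ n`, with equality for `n ≥ 1`; at `n = 0` the
inequality holds because `r 1 = 256 * A 0` and `r 0 ≥ 0`. Bernoulli's inequality for the exponent
`p ≤ 1` makes the powers of `r n` cancel (`rpow_step`), so that
`r (n + 1) ^ p ≤ r n ^ p + 128 * γ * q ^ n`. Summing the geometric series bounds `r n ^ p` by
`20 ^ (γ / 4) + 128 * γ / (1 - q)`, and raising to the power `1 / p = 2 / γ` gives the claim.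
-/

/-- An increment of `x` proportional to `x ^ (1 - p)` changes `x ^ p` by at most a constant: this is
Bernoulli's inequality applied to `x + x ^ (1 - p) * c = x * (1 + x ^ (-p) * c)`. -/
lemma rpow_step {x p c : ℝ} (hx : 0 < x) (hp0 : 0 ≤ p) (hp1 : p ≤ 1) (hc : 0 ≤ c) :
    (x + x ^ (1 - p) * c) ^ p ≤ x ^ p + p * c := by
  have hpos : 0 ≤ x ^ (-p) * c := by positivity
  have h1 : x + x ^ (1 - p) * c = x * (1 + x ^ (-p) * c) := by
    rw [sub_eq_add_neg, Real.rpow_add hx, Real.rpow_one]; ring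
  have hb := rpow_one_add_le_one_add_mul_self (s := x ^ (-p) * c) (by linarith) hp0 hp1
  have hcancel : x ^ p * x ^ (-p) = 1 := by
    rw [← Real.rpow_add hx]; simp
  calc (x + x ^ (1 - p) * c) ^ p = x ^ p * (1 + x ^ (-p) * c) ^ p := by
        rw [h1, Real.mul_rpow hx.le (by linarith)]
    _ ≤ x ^ p * (1 + p * (x ^ (-p) * c)) := by gcongr
    _ = x ^ p + p * c * (x ^ p * x ^ (-p)) := by ring
    _ = x ^ p + p * c := by rw [hcancel, mul_one]

/-- Proposition 6.5: boundedness of the recursively defined radii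
`r_n` when `ξ < 2` and `γ ∈ (0,2)`. -/
theorem statement17 (γ ξ : ℝ) (hγ0 : 0 < γ) (hγ2 : γ < 2) (hξ : ξ < 2)
    (r A : ℕ → ℝ)
    (hr0 : r 0 = Real.sqrt 20)
    (hA : ∀ n : ℕ, A n = r n ^ (1 - γ / 2) * (2:ℝ) ^ ((n : ℝ) * (ξ - 2) / 2))
    (hr : ∀ n : ℕ, r (n + 1) = 256 * ∑ k ∈ Finset.range (n + 1), A k) :
    ∀ j : ℕ, r j ≤ ((20:ℝ) ^ (γ / 4) + 128 * γ / (1 - (2:ℝ) ^ ((ξ - 2) / 2))) ^ (2 / γ) := by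
  set q : ℝ := (2:ℝ) ^ ((ξ - 2) / 2) with hq
  have hq0 : 0 < q := by positivity
  have hq1 : q < 1 := Real.rpow_lt_one_of_one_lt_of_neg (by norm_num) (by linarith)
  have hA' : ∀ n, A n = r n ^ (1 - γ / 2) * q ^ n := by
    intro n
    rw [hA, hq, ← Real.rpow_mul_natCast (by norm_num)]
    congr 2
    ring
  have hrpos : ∀ n, 0 < r n := by
    intro n
    induction n using Nat.strong_induction_on with
    | _ n ih =>
      cases n with
      | zero => rw [hr0]; positivity
      | succ n =>
        rw [hr]
        refine mul_pos (by norm_num) (Finset.sum_pos (fun k hk => ?_) (by simp))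
        have hk' := ih k (Finset.mem_range.mp hk)
        rw [hA']
        positivity
  have hstep : ∀ n, r (n + 1) ≤ r n + r n ^ (1 - γ / 2) * (256 * q ^ n) := by
    intro n
    have hsum : 256 * ∑ k ∈ Finset.range n, A k ≤ r n := by
      cases n with
      | zero => simpa using (hrpos 0).le
      | succ n => exact (hr n).ge
    rw [hr, Finset.sum_range_succ, hA']
    linarith
  have hpow : ∀ n, r n ^ (γ / 2) ≤ (20:ℝ) ^ (γ / 4) + 128 * γ * ∑ k ∈ Finset.range n, q ^ k := by
    intro n
    induction n with
    | zero =>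
      rw [hr0, Real.sqrt_eq_rpow, ← Real.rpow_mul (by norm_num)]
      have h : (1 / 2 * (γ / 2) : ℝ) = γ / 4 := by ring
      rw [h]
      simp
    | succ n ih =>
      have h1 : r (n + 1) ^ (γ / 2) ≤ (r n + r n ^ (1 - γ / 2) * (256 * q ^ n)) ^ (γ / 2) :=
        Real.rpow_le_rpow (hrpos _).le (hstep n) (by linarith)
      have h2 := rpow_step (p := γ / 2) (c := 256 * q ^ n) (hrpos n) (by linarith) (by linarith)
        (by positivity)
      rw [Finset.sum_range_succ]
      linarith
  intro j
  have hgeom : ∑ k ∈ Finset.range j, q ^ k ≤ (1 - q)⁻¹ := by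
    rw [← tsum_geometric_of_lt_one hq0.le hq1]
    exact (summable_geometric_of_lt_one hq0.le hq1).sum_le_tsum _ (fun _ _ => by positivity)
  have hbound : r j ^ (γ / 2) ≤ (20:ℝ) ^ (γ / 4) + 128 * γ / (1 - q) := by
    refine (hpow j).trans ?_
    rw [div_eq_mul_inv (128 * γ)]
    gcongr
  calc r j = (r j ^ (γ / 2)) ^ (2 / γ) := by
        rw [← Real.rpow_mul (hrpos j).le, div_mul_div_cancel₀' hγ0.ne', div_self two_ne_zero,
          Real.rpow_one]
    _ ≤ _ := Real.rpow_le_rpow (Real.rpow_nonneg (hrpos j).le _) hbound (by positivity)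
end
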